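/- Assume there exist α > 0 and a real constant c such that k^α r(k) → c as k → ∞, fix an integer p ≥ 1 with r_{Z^{(p)}}(0) > 0, and assume moreover that r_{Z^{(p)}} is asymptotically of constant sign with |r_{Z^{(p)}}| eventually monotone. Then with f₂(x) = x² there exist constants c₀, C₀ > 0 such that for all n ≥ 1: c₀/√n ≤ d_W( U_{f₂,n}(Z^{(p)}), N(0, u_{f₂}(Z^{(p)})) ) ≤ C₀/√n. -/

import Mathlib

open MeasureTheory ProbabilityTheory Filter
open scoped NNReal ENNReal

noncomputable section

variable {Ω : Type*} [MeasureSpace Ω]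

/-- `Z` is a centered stationary Gaussian sequence with covariance `r`. -/
def IsCSG (Z : ℤ → Ω → ℝ) (r : ℤ → ℝ) : Prop :=
  (∀ k, Measurable (Z k)) ∧
  (∀ (s : Finset ℤ) (a : ℤ → ℝ), ∃ v : ℝ≥0,
    Measure.map (fun ω => ∑ k ∈ s, a k * Z k ω) (ℙ : Measure Ω) = gaussianReal 0 v) ∧
  (∀ j k : ℤ, ∫ ω, Z j ω * Z k ω = r (k - j)) ∧
  0 < r 0

/-- `m`-th probabilists' Hermite polynomial, as a function on `ℝ`. -/
def hermiteFun (m : ℕ) (x : ℝ) : ℝ := Polynomial.aeval x (Polynomial.hermite m)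

/-- The polynomial `f_q(x) = ∑_{k=0}^{q/2} d_{2k} He_{2k}(x/√r0)`. -/
def fpoly (r0 : ℝ) (d : ℕ → ℝ) (q : ℕ) (x : ℝ) : ℝ :=
  ∑ k ∈ Finset.range (q / 2 + 1), d (2 * k) * hermiteFun (2 * k) (x / Real.sqrt r0)

/-- Polynomial variation `Q_{f,n}(X)`. -/
def Qvar (f : ℝ → ℝ) (X : ℤ → Ω → ℝ) (n : ℕ) (ω : Ω) : ℝ :=
  (1 / (n : ℝ)) * ∑ i ∈ Finset.range n, f (X (i : ℤ) ω)

/-- `λ_f(X) = E[f(X_0)]`. -/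
def lamE (f : ℝ → ℝ) (X : ℤ → Ω → ℝ) : ℝ := ∫ ω, f (X 0 ω)

/-- `U_{f,n}(X) = √n (Q_{f,n}(X) − λ_f(X))`. -/
def Ustat (f : ℝ → ℝ) (X : ℤ → Ω → ℝ) (n : ℕ) (ω : Ω) : ℝ :=
  Real.sqrt n * (Qvar f X n ω - lamE f X)

/-- Variance of `U_{f,n}(X)`. -/
def varU (f : ℝ → ℝ) (X : ℤ → Ω → ℝ) (n : ℕ) : ℝ := ∫ ω, (Ustat f X n ω) ^ 2

/-- Standardized statistic `F_{f,n}(X)`. -/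
def Fstat (f : ℝ → ℝ) (X : ℤ → Ω → ℝ) (n : ℕ) (ω : Ω) : ℝ :=
  Ustat f X n ω / Real.sqrt (varU f X n)

/-- fourth cumulant `κ₄(X) = E[X⁴] − 3 (E[X²])²` of a centered random variable. -/
def kappa4 (X : Ω → ℝ) : ℝ := (∫ ω, X ω ^ 4) - 3 * (∫ ω, X ω ^ 2) ^ 2

/-- third cumulant `κ₃(X) = E[X³]`. -/
def kappa3 (X : Ω → ℝ) : ℝ := ∫ ω, X ω ^ 3

/-- `u_{f_q}(Z) = ∑_{k=1}^{q/2} d_{2k}² (2k)! ∑_{j∈ℤ} (r(j)/r(0))^{2k}`. -/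
def ufq (r : ℤ → ℝ) (d : ℕ → ℝ) (q : ℕ) : ℝ :=
  ∑ k ∈ Finset.Icc 1 (q / 2),
    (d (2 * k)) ^ 2 * (Nat.factorial (2 * k)) * ∑' j : ℤ, (r j / r 0) ^ (2 * k)

/-- Total variation distance between two laws on `ℝ`. -/
def dTV (μ ν : Measure ℝ) : ℝ :=
  ⨆ A : {A : Set ℝ // MeasurableSet A}, |(μ A.1).toReal - (ν A.1).toReal|

/-- Wasserstein distance between two laws on `ℝ`. -/
def dW (μ ν : Measure ℝ) : ℝ :=
  ⨆ f : {f : ℝ → ℝ // LipschitzWith 1 f}, |(∫ x, f.1 x ∂μ) - ∫ x, f.1 x ∂ν|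

/-- The quadratic function `f₂(x) = x²`. -/
def f2 : ℝ → ℝ := fun x => x ^ 2

/-- `U_{f₂,n}(X) = √n (Q_{f₂,n}(X) − r(0))`, quadratic case. -/
def U2 (X : ℤ → Ω → ℝ) (r0 : ℝ) (n : ℕ) (ω : Ω) : ℝ :=
  Real.sqrt n * (Qvar f2 X n ω - r0)

/-- Variance of `U_{f₂,n}`. -/
def varU2 (X : ℤ → Ω → ℝ) (r0 : ℝ) (n : ℕ) : ℝ := ∫ ω, (U2 X r0 n ω) ^ 2

/-- Standardized quadratic statistic `F_{f₂,n}`. -/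
def F2stat (X : ℤ → Ω → ℝ) (r0 : ℝ) (n : ℕ) (ω : Ω) : ℝ :=
  U2 X r0 n ω / Real.sqrt (varU2 X r0 n)

/-- `p`-th order finite difference of a sequence of processes. -/
def fdiff : ℕ → (ℤ → Ω → ℝ) → (ℤ → Ω → ℝ)
  | 0, Z => Z
  | (p + 1), Z => fun k ω => fdiff p Z (k + 1) ω - fdiff p Z k ω

/-
In principal components of the Gaussian vector of the first `n` observations the statistic is
`n ^ (-1/2) * ∑ j, (Y j ^ 2 - v j)` with independent `Y j ∼ N(0, v j)`. Stein's method bounds its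
distance to the limit law through the fluctuation `(∑ j, (v j) ^ 4) ^ (1/2) / n` of the Stein kernel
and the bias `∑ j, (v j) ^ 2 / n - ∑ j, ρ j ^ 2`, and both are `O(n ^ (-1/2))` as soon as
`∑ j, |j| * |ρ j| < ∞`. That sum is finite because, up to sign, `ρ` is a second difference of a
bounded sequence: being eventually of constant sign, it can be summed by parts.
For the lower bound, the sine of a small multiple of the statistic is tested. Its mean under the
limit law vanishes by oddness, while the explicit characteristic function makes its mean under the
law of the statistic of order `n ^ (-3/2) * ∑ j, (v j) ^ 3`, which is at least of order `n ^ (-1/2)`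
because the average of the `v j` is `ρ 0`.
-/

section GaussianIntegration

lemma hasDerivAt_gaussianPDFReal (μ : ℝ) (v : ℝ≥0) (x : ℝ) :
    HasDerivAt (gaussianPDFReal μ v) (-((x - μ) / v) * gaussianPDFReal μ v x) x := by
  have hexponent : HasDerivAt (fun x : ℝ => -(x - μ) ^ 2 / (2 * v)) (-((x - μ) / v)) x := by
    refine ((((hasDerivAt_id x).sub_const μ).fun_pow 2).fun_neg.div_const (2 * (v : ℝ))).congr_deriv
      ?_
    rw [← mul_div_mul_left (x - μ) (v : ℝ) two_ne_zero]
    simp only [id_eq, Nat.cast_ofNat, Nat.add_one_sub_one, pow_one, mul_one, neg_div]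
  exact (hexponent.exp.const_mul (√(2 * Real.pi * v))⁻¹).congr_deriv
    (by rw [gaussianPDFReal]; ring)

lemma continuous_gaussianPDFReal (μ : ℝ) (v : ℝ≥0) : Continuous (gaussianPDFReal μ v) :=
  continuous_iff_continuousAt.2 fun x => (hasDerivAt_gaussianPDFReal μ v x).continuousAt

variable {μ : ℝ} {v : ℝ≥0}

lemma integrable_gaussianReal_iff (hv : v ≠ 0) {f : ℝ → ℝ} :
    Integrable f (gaussianReal μ v) ↔ Integrable fun x => gaussianPDFReal μ v x * f x := by
  rw [gaussianReal_of_var_ne_zero _ hv, integrable_withDensity_iff_integrable_smul₀'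
    (by fun_prop) (ae_of_all _ fun x => gaussianPDF_lt_top)]
  simp only [toReal_gaussianPDF, smul_eq_mul]

lemma integrable_pow_gaussianReal (k : ℕ) : Integrable (fun x => x ^ k) (gaussianReal μ v) := by
  rw [← integrable_norm_iff (by fun_prop)]
  simpa only [id_eq, norm_pow] using
    (memLp_id_gaussianReal (μ := μ) (v := v) k).integrable_norm_pow'

lemma memLp_two_pow_gaussianReal (k : ℕ) : MemLp (fun x => x ^ k) 2 (gaussianReal μ v) := by
  rw [memLp_two_iff_integrable_sq (by fun_prop)]
  simpa only [← pow_mul] using integrable_pow_gaussianReal (k * 2)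

/-- For `v ≠ 0` this is `∫ (φ p)' = 0` for the Gaussian density `p`, since `v p' = -x p`. -/
lemma integral_mul_gaussianReal {φ φ' : ℝ → ℝ} (hd : ∀ x, HasDerivAt φ (φ' x) x)
    (hφ : Integrable φ (gaussianReal 0 v)) (hxφ : Integrable (fun x => x * φ x) (gaussianReal 0 v))
    (hφ' : Integrable φ' (gaussianReal 0 v)) :
    ∫ x, x * φ x ∂gaussianReal 0 v = v * ∫ x, φ' x ∂gaussianReal 0 v := by
  rcases eq_or_ne v 0 with rfl | hv
  · simp
  have hv' : (v : ℝ) ≠ 0 := by exact_mod_cast hv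
  rw [integrable_gaussianReal_iff hv] at hφ hxφ hφ'
  have hzero := integral_eq_zero_of_hasDerivAt_of_integrable
    (f := fun x => v * (gaussianPDFReal 0 v x * φ x))
    (f' := fun x => v * (gaussianPDFReal 0 v x * φ' x) - gaussianPDFReal 0 v x * (x * φ x))
    (fun x => (((hasDerivAt_gaussianPDFReal 0 v x).mul (hd x)).const_mul (v : ℝ)).congr_deriv
      (by rw [sub_zero]; field_simp; ring))
    ((hφ'.const_mul _).sub hxφ) (hφ.const_mul _)
  rw [integral_sub (hφ'.const_mul _) hxφ, integral_const_mul] at hzero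
  simp only [integral_gaussianReal_eq_integral_smul hv, smul_eq_mul]
  linarith

lemma integral_sq_gaussianReal : ∫ x, x ^ 2 ∂gaussianReal 0 v = v := by
  rw [← variance_fun_id_gaussianReal (μ := 0) (v := v),
    variance_of_integral_eq_zero (by fun_prop) (by simp)]

lemma integral_pow_four_gaussianReal : ∫ x, x ^ 4 ∂gaussianReal 0 v = 3 * (v : ℝ) ^ 2 := by
  have hparts := integral_mul_gaussianReal (v := v) (φ := fun x => x ^ 3)
    (φ' := fun x => 3 * x ^ 2) (fun x => by simpa using hasDerivAt_pow 3 x)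
    (integrable_pow_gaussianReal 3)
    (by simpa only [← pow_succ'] using integrable_pow_gaussianReal 4)
    ((integrable_pow_gaussianReal 2).const_mul 3)
  rw [integral_const_mul, integral_sq_gaussianReal] at hparts
  simp only [← pow_succ', Nat.reduceAdd] at hparts
  rw [hparts]
  ring

end GaussianIntegration

section Lipschitz

lemma abs_sub_le_of_lipschitzWith {h : ℝ → ℝ} {K : ℝ≥0} (hh : LipschitzWith K h) (x y : ℝ) :
    |h x - h y| ≤ K * |x - y| :=
  hh.norm_sub_le x y

variable {Ω : Type*} {mΩ : MeasurableSpace Ω} {P : Measure Ω} {X : Ω → ℝ}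

lemma memLp_comp_of_lipschitzWith [IsFiniteMeasure P] {h : ℝ → ℝ} {K : ℝ≥0}
    (hh : LipschitzWith K h) {p : ℝ≥0∞} (hX : MemLp X p P) : MemLp (fun ω => h (X ω)) p P := by
  have hcentred : LipschitzWith K fun x => h x - h 0 :=
    LipschitzWith.of_dist_le_mul fun x y => by simpa using hh.dist_le_mul x y
  refine ((hcentred.comp_memLp (sub_self _) hX).add (memLp_const (h 0))).ae_eq ?_
  exact ae_of_all _ fun ω => sub_add_cancel (h (X ω)) (h 0)

lemma integral_abs_le_sqrt_integral_sq [IsProbabilityMeasure P] (hX : MemLp X 2 P) :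
    ∫ ω, |X ω| ∂P ≤ √(∫ ω, X ω ^ 2 ∂P) := by
  have hvar := variance_nonneg |X| P
  rw [variance_eq_sub hX.abs] at hvar
  simp only [Pi.pow_apply, Pi.abs_apply, sq_abs, sub_nonneg] at hvar
  exact Real.le_sqrt_of_sq_le hvar

end Lipschitz

section SteinEquation

lemma hasDerivAt_integral_Iic {f : ℝ → ℝ} (hf : Integrable f) (hfc : Continuous f) (w : ℝ) :
    HasDerivAt (fun w => ∫ x in Set.Iic w, f x) (f w) w := by
  have hsplit : (fun w => ∫ x in Set.Iic w, f x) =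
      fun w => (∫ x in Set.Iic 0, f x) + ∫ x in (0 : ℝ)..w, f x := by
    funext w
    rw [← intervalIntegral.integral_Iic_sub_Iic hf.integrableOn hf.integrableOn, add_sub_cancel]
  rw [hsplit]
  exact (intervalIntegral.integral_hasDerivAt_right hf.intervalIntegrable
    (hfc.stronglyMeasurableAtFilter _ _) hfc.continuousAt).const_add _

variable {v : ℝ≥0}

lemma integral_Ioi_gaussianPDFReal_mul (hv : v ≠ 0) (w : ℝ) :
    ∫ x in Set.Ioi w, gaussianPDFReal 0 v x * x = v * gaussianPDFReal 0 v w := by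
  have hint : Integrable fun x => gaussianPDFReal 0 v x * x :=
    (integrable_gaussianReal_iff hv).1 ((memLp_id_gaussianReal 1).integrable le_rfl)
  have hderiv : ∀ x, HasDerivAt (fun x => -(v * gaussianPDFReal 0 v x))
      (gaussianPDFReal 0 v x * x) x := fun x =>
    ((hasDerivAt_gaussianPDFReal 0 v x).const_mul (v : ℝ)).fun_neg.congr_deriv (by
      have : (v : ℝ) ≠ 0 := by exact_mod_cast hv
      field_simp
      ring)
  have hlim : Tendsto (fun x => -(v * gaussianPDFReal 0 v x)) atTop (nhds 0) :=
    tendsto_zero_of_hasDerivAt_of_integrableOn_Ioi (a := w) (fun x _ => hderiv x)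
      hint.integrableOn ((integrable_gaussianPDFReal 0 v).const_mul _).neg.integrableOn
  rw [integral_Ioi_of_hasDerivAt_of_tendsto' (fun x _ => hderiv x) hint.integrableOn hlim]
  ring

lemma gaussianPDFReal_eq_mul_exp (w x : ℝ) :
    gaussianPDFReal 0 v x = gaussianPDFReal 0 v w * Real.exp ((w ^ 2 - x ^ 2) / (2 * v)) := by
  simp only [gaussianPDFReal, mul_assoc, ← Real.exp_add]
  ring_nf

lemma sub_mul_exp_le (hv : 0 < v) {w x : ℝ} (hw : 0 ≤ w) (hx : w ≤ x) :
    (x - w) * (2 * w + √v) * Real.exp ((w ^ 2 - x ^ 2) / (2 * v)) ≤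
      3 * v * Real.exp (-(1 / (4 * v)) * (x - w) ^ 2) := by
  obtain ⟨y, hy, rfl⟩ : ∃ y, 0 ≤ y ∧ x = w + y := ⟨x - w, by linarith, by ring⟩
  have hv' : (0 : ℝ) < v := by exact_mod_cast hv
  have hexponent : (w ^ 2 - (w + y) ^ 2) / (2 * v) =
      -((w * y + y ^ 2 / 4) / v) + -(1 / (4 * v)) * (w + y - w) ^ 2 := by
    field_simp
    ring
  rw [hexponent, Real.exp_add, ← mul_assoc, add_sub_cancel_left]
  refine mul_le_mul_of_nonneg_right ?_ (Real.exp_pos _).le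
  rw [Real.exp_neg, ← div_eq_mul_inv, div_le_iff₀ (Real.exp_pos _)]
  have hexp : v + (w * y + y ^ 2 / 4) ≤ v * Real.exp ((w * y + y ^ 2 / 4) / v) := by
    calc v + (w * y + y ^ 2 / 4) = v * ((w * y + y ^ 2 / 4) / v + 1) := by field_simp; ring
      _ ≤ _ := by gcongr; exact Real.add_one_le_exp _
  nlinarith [sq_nonneg (y - 2 * √v), Real.sq_sqrt hv'.le, mul_nonneg hw hy]

variable {h : ℝ → ℝ} {K : ℝ≥0}

lemma abs_mul_sub_mul_le_of_lipschitzWith (hh : LipschitzWith K h) {σ : ℝ} (h0 : |h 0| ≤ K * σ)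
    {w x : ℝ} (hw : 0 ≤ w) (hx : w ≤ x) :
    |w * h x - x * h w| ≤ K * ((x - w) * (2 * w + σ)) := by
  have hxw : |h x - h w| ≤ K * (x - w) := by
    simpa only [abs_of_nonneg (sub_nonneg.2 hx)] using abs_sub_le_of_lipschitzWith hh x w
  have hw0 : |h w| ≤ K * w + K * σ := by
    have := abs_sub_le_of_lipschitzWith hh w 0
    rw [sub_zero, abs_of_nonneg hw] at this
    linarith [abs_sub_abs_le_abs_sub (h w) (h 0)]
  calc |w * h x - x * h w| = |w * (h x - h w) - (x - w) * h w| := by ring_nf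
    _ ≤ w * |h x - h w| + (x - w) * |h w| := by
        refine (abs_sub _ _).trans_eq ?_
        rw [abs_mul, abs_mul, abs_of_nonneg hw, abs_of_nonneg (sub_nonneg.2 hx)]
    _ ≤ w * (K * (x - w)) + (x - w) * (K * w + K * σ) := by
        have := sub_nonneg.2 hx
        gcongr
    _ = _ := by ring

lemma integrable_gaussianReal_of_lipschitzWith (hh : LipschitzWith K h) (μ : ℝ) :
    Integrable h (gaussianReal μ v) :=
  (memLp_comp_of_lipschitzWith hh (memLp_id_gaussianReal 1)).integrable le_rfl

lemma abs_sub_integral_gaussianReal_le (hh : LipschitzWith K h) :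
    |h 0 - ∫ x, h x ∂gaussianReal 0 v| ≤ K * √v := by
  have hid : MemLp (fun x : ℝ => x) 2 (gaussianReal 0 v) := memLp_id_gaussianReal 2
  have hmean : h 0 - ∫ x, h x ∂gaussianReal 0 v = ∫ x, (h 0 - h x) ∂gaussianReal 0 v := by
    rw [integral_sub (integrable_const _) (integrable_gaussianReal_of_lipschitzWith hh 0)]
    simp
  rw [hmean, ← Real.norm_eq_abs]
  calc ‖∫ x, (h 0 - h x) ∂gaussianReal 0 v‖ ≤ ∫ x, K * |x| ∂gaussianReal 0 v :=
        norm_integral_le_of_norm_le ((hid.integrable one_le_two).abs.const_mul _)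
          (ae_of_all _ fun x => by simpa using abs_sub_le_of_lipschitzWith hh 0 x)
    _ ≤ K * √v := by
        rw [integral_const_mul, ← integral_sq_gaussianReal (v := v)]
        gcongr
        exact integral_abs_le_sqrt_integral_sq hid

lemma mul_integral_Ioi_gaussianPDFReal_mul_sub_eq (hv : v ≠ 0)
    (hh : Integrable h (gaussianReal 0 v)) (w : ℝ) :
    w * ((v * gaussianPDFReal 0 v w)⁻¹ * ∫ x in Set.Ioi w, gaussianPDFReal 0 v x * h x) - h w =
      (v * gaussianPDFReal 0 v w)⁻¹ *
        ∫ x in Set.Ioi w, gaussianPDFReal 0 v x * (w * h x - x * h w) := by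
  have hp := gaussianPDFReal_pos 0 v w hv
  have hv' : (v : ℝ) ≠ 0 := by exact_mod_cast hv
  have hid : Integrable (fun x : ℝ => x) (gaussianReal 0 v) :=
    (memLp_id_gaussianReal 1).integrable le_rfl
  rw [integrable_gaussianReal_iff hv] at hh hid
  have hexpand : ∀ x, gaussianPDFReal 0 v x * (w * h x - x * h w) =
      w * (gaussianPDFReal 0 v x * h x) - h w * (gaussianPDFReal 0 v x * x) := fun x => by ring
  simp only [hexpand]
  rw [integral_sub (hh.const_mul _).integrableOn (hid.const_mul _).integrableOn,
    integral_const_mul, integral_const_mul, integral_Ioi_gaussianPDFReal_mul hv]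
  field_simp

/-- The Lipschitz bound turns the integrand into a Gaussian bump at `w` of width `√v`. -/
lemma abs_integral_Ioi_gaussianPDFReal_mul_le (hv : 0 < v) (hh : LipschitzWith K h)
    (h0 : |h 0| ≤ K * √v) {w : ℝ} (hw : 0 ≤ w) :
    |∫ x in Set.Ioi w, gaussianPDFReal 0 v x * (w * h x - x * h w)| ≤
      v * gaussianPDFReal 0 v w * (3 * K * √(4 * Real.pi * v)) := by
  have hp := gaussianPDFReal_pos 0 v w hv.ne'
  have hbump : Integrable fun x : ℝ =>
      3 * K * (v * gaussianPDFReal 0 v w) * Real.exp (-(1 / (4 * v)) * (x - w) ^ 2) :=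
    ((integrable_exp_neg_mul_sq (by positivity)).comp_sub_right w).const_mul _
  have hpointwise : ∀ x, w < x → ‖gaussianPDFReal 0 v x * (w * h x - x * h w)‖ ≤
      3 * K * (v * gaussianPDFReal 0 v w) * Real.exp (-(1 / (4 * v)) * (x - w) ^ 2) := by
    intro x hx
    rw [norm_mul, Real.norm_of_nonneg (gaussianPDFReal_nonneg 0 v x), Real.norm_eq_abs,
      gaussianPDFReal_eq_mul_exp w x]
    have hcross := abs_mul_sub_mul_le_of_lipschitzWith hh h0 hw hx.le
    have hkernel := sub_mul_exp_le hv hw hx.le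
    calc _ ≤ gaussianPDFReal 0 v w * Real.exp ((w ^ 2 - x ^ 2) / (2 * v)) *
          (K * ((x - w) * (2 * w + √v))) := by gcongr
      _ = gaussianPDFReal 0 v w * K *
          ((x - w) * (2 * w + √v) * Real.exp ((w ^ 2 - x ^ 2) / (2 * v))) := by ring
      _ ≤ gaussianPDFReal 0 v w * K * (3 * v * Real.exp (-(1 / (4 * v)) * (x - w) ^ 2)) := by
          gcongr
      _ = _ := by ring
  calc _ ≤ ∫ x, 3 * K * (v * gaussianPDFReal 0 v w) * Real.exp (-(1 / (4 * v)) * (x - w) ^ 2) :=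
        (norm_integral_le_of_norm_le hbump.integrableOn
          ((ae_restrict_mem measurableSet_Ioi).mono hpointwise)).trans
          (setIntegral_le_integral hbump (ae_of_all _ fun x => by positivity))
    _ = _ := by
        rw [integral_const_mul,
          integral_sub_right_eq_self (fun x => Real.exp (-(1 / (4 * v)) * x ^ 2)),
          integral_gaussian, div_div_eq_mul_div, div_one]
        ring_nf

/-- The solution `F` of Stein's equation `v F'(w) - w F(w) = h(w) - ∫ h dN(0, v)` for the law
`N(0, v)` with density `p`, namely `F(w) = (v p(w))⁻¹ ∫_{-∞}^w p (h - ∫ h dN(0, v))`. -/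
def steinSolution (h : ℝ → ℝ) (v : ℝ≥0) (w : ℝ) : ℝ :=
  (v * gaussianPDFReal 0 v w)⁻¹ *
    ∫ x in Set.Iic w, gaussianPDFReal 0 v x * (h x - ∫ y, h y ∂gaussianReal 0 v)

lemma hasDerivAt_steinSolution (hv : v ≠ 0) (hc : Continuous h)
    (hh : Integrable h (gaussianReal 0 v)) (w : ℝ) :
    HasDerivAt (steinSolution h v)
      ((w * steinSolution h v w + (h w - ∫ x, h x ∂gaussianReal 0 v)) / v) w := by
  have hp := gaussianPDFReal_pos 0 v w hv
  have hv' : (v : ℝ) ≠ 0 := by exact_mod_cast hv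
  have hnum := hasDerivAt_integral_Iic
    ((integrable_gaussianReal_iff hv).1 (hh.sub (integrable_const (∫ y, h y ∂gaussianReal 0 v))))
    ((continuous_gaussianPDFReal 0 v).mul (hc.sub continuous_const)) w
  have hden := ((hasDerivAt_gaussianPDFReal 0 v w).const_mul (v : ℝ)).inv (by positivity)
  refine (hden.mul hnum).congr_deriv ?_
  simp only [steinSolution, Pi.sub_apply, sub_zero, Pi.inv_apply]
  field_simp

lemma mul_deriv_steinSolution_sub (hv : v ≠ 0) (hh : LipschitzWith K h) (w : ℝ) :
    v * deriv (steinSolution h v) w - w * steinSolution h v w =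
      h w - ∫ x, h x ∂gaussianReal 0 v := by
  have hv' : (v : ℝ) ≠ 0 := by exact_mod_cast hv
  rw [(hasDerivAt_steinSolution hv hh.continuous
    (integrable_gaussianReal_of_lipschitzWith hh 0) w).deriv, mul_div_cancel₀ _ hv',
    add_sub_cancel_left]

lemma contDiff_steinSolution (hv : v ≠ 0) (hh : LipschitzWith K h) :
    ContDiff ℝ 1 (steinSolution h v) := by
  have hderiv := hasDerivAt_steinSolution hv hh.continuous
    (integrable_gaussianReal_of_lipschitzWith hh 0)
  have hdiff : Differentiable ℝ (steinSolution h v) := fun w => (hderiv w).differentiableAt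
  refine contDiff_one_iff_deriv.2 ⟨hdiff, ?_⟩
  rw [funext fun w => (hderiv w).deriv]
  have hF := hdiff.continuous
  have hc := hh.continuous
  fun_prop

lemma steinSolution_eq_neg_integral_Ioi (hv : v ≠ 0) (hh : Integrable h (gaussianReal 0 v))
    (w : ℝ) :
    steinSolution h v w = -((v * gaussianPDFReal 0 v w)⁻¹ *
      ∫ x in Set.Ioi w, gaussianPDFReal 0 v x * (h x - ∫ y, h y ∂gaussianReal 0 v)) := by
  have hcentred := hh.sub (integrable_const (∫ y, h y ∂gaussianReal 0 v))
  have htotal : ∫ x, gaussianPDFReal 0 v x * (h x - ∫ y, h y ∂gaussianReal 0 v) = 0 := by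
    simp only [← smul_eq_mul (a := gaussianPDFReal 0 v _)]
    rw [← integral_gaussianReal_eq_integral_smul hv, integral_sub hh (integrable_const _)]
    simp
  rw [integrable_gaussianReal_iff hv] at hcentred
  have hsplit := intervalIntegral.integral_Iic_add_Ioi (b := w) hcentred.integrableOn
    hcentred.integrableOn
  simp only [Pi.sub_apply, htotal] at hsplit
  rw [steinSolution, ← mul_neg, eq_neg_of_add_eq_zero_left hsplit]

lemma integral_comp_neg_gaussianReal (f : ℝ → ℝ) :
    ∫ x, f (-x) ∂gaussianReal 0 v = ∫ x, f x ∂gaussianReal 0 v := by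
  calc ∫ x, f (-x) ∂gaussianReal 0 v = ∫ x, f x ∂(gaussianReal 0 v).map (fun x => -x) :=
        ((MeasurableEquiv.neg ℝ).measurableEmbedding.integral_map f).symm
    _ = ∫ x, f x ∂gaussianReal 0 v := by rw [gaussianReal_map_neg, neg_zero]

lemma steinSolution_comp_neg (hv : v ≠ 0) (hh : Integrable h (gaussianReal 0 v)) (w : ℝ) :
    steinSolution (fun x => h (-x)) v (-w) = -steinSolution h v w := by
  have hp : ∀ x, gaussianPDFReal 0 v (-x) = gaussianPDFReal 0 v x := fun x => by
    simp only [gaussianPDFReal, sub_zero, neg_sq]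
  have hflip := integral_comp_neg_Iic (-w)
    fun x => gaussianPDFReal 0 v x * (h x - ∫ y, h y ∂gaussianReal 0 v)
  simp only [hp, neg_neg] at hflip
  rw [steinSolution_eq_neg_integral_Ioi hv hh, neg_neg, steinSolution, hp,
    integral_comp_neg_gaussianReal h, hflip]

lemma abs_deriv_steinSolution_le (hv : 0 < v) (hh : LipschitzWith K h) (w : ℝ) :
    |deriv (steinSolution h v) w| ≤ 3 * K * √(4 * Real.pi / v) := by
  have hv' : (0 : ℝ) < v := by exact_mod_cast hv
  suffices hbound : ∀ {h : ℝ → ℝ}, LipschitzWith K h → ∀ {w : ℝ}, 0 ≤ w →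
      |w * steinSolution h v w + (h w - ∫ x, h x ∂gaussianReal 0 v)| ≤
        3 * K * √(4 * Real.pi * v) by
    have hsqrt : √(4 * Real.pi * v) = √(4 * Real.pi / v) * v := by
      rw [show 4 * Real.pi * v = 4 * Real.pi / v * (v : ℝ) ^ 2 by field_simp,
        Real.sqrt_mul (by positivity), Real.sqrt_sq hv'.le]
    have hi := integrable_gaussianReal_of_lipschitzWith (v := v) hh 0
    rw [(hasDerivAt_steinSolution hv.ne' hh.continuous hi w).deriv, abs_div, abs_of_pos hv',
      div_le_iff₀ hv', mul_assoc, ← hsqrt]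
    rcases le_total 0 w with hw | hw
    · exact hbound hh hw
    · have hreflected := hbound (h := fun x => h (-x)) (w := -w)
        (LipschitzWith.of_dist_le_mul fun x y => by simpa using hh.dist_le_mul (-x) (-y))
        (neg_nonneg.2 hw)
      rwa [steinSolution_comp_neg hv.ne' hi, neg_mul_neg, neg_neg,
        integral_comp_neg_gaussianReal h] at hreflected
  intro h hh w hw
  set c := ∫ x, h x ∂gaussianReal 0 v
  have hcentred : LipschitzWith K fun x => h x - c :=
    LipschitzWith.of_dist_le_mul fun x y => by simpa using hh.dist_le_mul x y
  have hp := gaussianPDFReal_pos 0 v w hv.ne'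
  rw [steinSolution_eq_neg_integral_Ioi hv.ne' (integrable_gaussianReal_of_lipschitzWith hh 0),
    ← abs_neg, neg_add, mul_neg, neg_neg, ← sub_eq_add_neg,
    mul_integral_Ioi_gaussianPDFReal_mul_sub_eq hv.ne'
      (integrable_gaussianReal_of_lipschitzWith hcentred 0),
    abs_mul, abs_of_pos (by positivity), inv_mul_le_iff₀ (by positivity)]
  exact abs_integral_Ioi_gaussianPDFReal_mul_le hv hcentred (abs_sub_integral_gaussianReal_le hh) hw

lemma lipschitzWith_steinSolution (hv : 0 < v) (hh : LipschitzWith K h) :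
    LipschitzWith (3 * K * √(4 * Real.pi / v)).toNNReal (steinSolution h v) := by
  refine lipschitzWith_of_nnnorm_deriv_le
    ((contDiff_steinSolution hv.ne' hh).differentiable one_ne_zero) fun w => ?_
  rw [← NNReal.coe_le_coe, Real.coe_toNNReal _ (by positivity)]
  exact abs_deriv_steinSolution_le hv hh w

end SteinEquation

section SteinKernel

variable {Ω Ω' : Type*} {mΩ : MeasurableSpace Ω} {mΩ' : MeasurableSpace Ω'} {P : Measure Ω}
  {X X' T T' : Ω → ℝ}

/-- `T` is a Stein kernel of the centred variable `X`: integration by parts against `X` produces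
the weight `T`. `T` need not be a function of `X`, and the test functions are the Lipschitz
functions of class `C¹`, a class stable under translation and containing `steinSolution`. -/
structure HasSteinKernel (X T : Ω → ℝ) (P : Measure Ω) : Prop where
  memLp : MemLp X 2 P
  integrable : Integrable T P
  integral_mul : ∀ ⦃F : ℝ → ℝ⦄ ⦃K : ℝ≥0⦄, ContDiff ℝ 1 F → LipschitzWith K F →
    ∫ ω, X ω * F (X ω) ∂P = ∫ ω, T ω * deriv F (X ω) ∂P

lemma integrable_mul_deriv_comp {F : ℝ → ℝ} {K : ℝ≥0} (hF : ContDiff ℝ 1 F)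
    (hK : LipschitzWith K F) (hX : AEStronglyMeasurable X P) (hT : Integrable T P) :
    Integrable (fun ω => T ω * deriv F (X ω)) P :=
  hT.mul_bdd (hF.continuous_deriv_one.comp_aestronglyMeasurable hX)
    (ae_of_all _ fun _ => norm_deriv_le_of_lipschitz hK)

lemma HasSteinKernel.comp_hasLaw {ν : Measure Ω} (h : HasSteinKernel X T ν) {P : Measure Ω'}
    {Y : Ω' → Ω} (hY : HasLaw Y ν P) :
    HasSteinKernel (fun ω => X (Y ω)) (fun ω => T (Y ω)) P where
  memLp := (hY.map_eq ▸ h.memLp).comp_of_map hY.aemeasurable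
  integrable := (hY.map_eq ▸ h.integrable).comp_aemeasurable hY.aemeasurable
  integral_mul F K hF hK := by
    have hX := h.memLp.aestronglyMeasurable
    exact (hY.integral_comp (hX.mul (hF.continuous.comp_aestronglyMeasurable hX))).trans
      ((h.integral_mul hF hK).trans
        (hY.integral_comp (integrable_mul_deriv_comp hF hK hX h.integrable).1).symm)

lemma hasSteinKernel_sq_sub_gaussianReal (v : ℝ≥0) :
    HasSteinKernel (fun x => x ^ 2 - (v : ℝ)) (fun x => 2 * v * x ^ 2) (gaussianReal 0 v) where
  memLp := (memLp_two_pow_gaussianReal 2).sub (memLp_const _)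
  integrable := (integrable_pow_gaussianReal 2).const_mul _
  integral_mul F K hF hK := by
    have hsq : MemLp (fun x => x ^ 2 - (v : ℝ)) 2 (gaussianReal 0 v) :=
      (memLp_two_pow_gaussianReal 2).sub (memLp_const _)
    have hFsq := memLp_comp_of_lipschitzWith hK hsq
    have hderiv : ∀ x, HasDerivAt (fun x => x * F (x ^ 2 - v))
        (F (x ^ 2 - v) + 2 * (x ^ 2 * deriv F (x ^ 2 - v))) x := fun x =>
      ((hasDerivAt_id x).mul (((hF.differentiable one_ne_zero _).hasDerivAt).comp x
        ((hasDerivAt_pow 2 x).sub_const (v : ℝ)))).congr_deriv (by simp; ring)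
    have hx : MemLp (fun x : ℝ => x) 2 (gaussianReal 0 v) := memLp_id_gaussianReal 2
    have hx2 : Integrable (fun x => x ^ 2 * F (x ^ 2 - v)) (gaussianReal 0 v) :=
      (memLp_two_pow_gaussianReal 2).integrable_mul hFsq
    have hF' := (integrable_mul_deriv_comp hF hK hsq.1
      (integrable_pow_gaussianReal (μ := 0) (v := v) 2)).const_mul 2
    have hFi := hFsq.integrable one_le_two
    have hparts := integral_mul_gaussianReal hderiv (hx.integrable_mul hFsq)
      (by simpa only [← mul_assoc, ← sq] using hx2) (hFi.add hF')
    simp only [← mul_assoc, ← sq] at hparts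
    simp only [mul_assoc] at hparts
    rw [integral_add hFi hF', integral_const_mul] at hparts
    simp only [sub_mul, mul_assoc]
    rw [integral_sub hx2 (hFi.const_mul _), integral_const_mul, hparts, integral_const_mul,
      integral_const_mul]
    ring

namespace HasSteinKernel

lemma const_mul (h : HasSteinKernel X T P) (a : ℝ) :
    HasSteinKernel (fun ω => a * X ω) (fun ω => a ^ 2 * T ω) P where
  memLp := h.memLp.const_mul a
  integrable := h.integrable.const_mul _
  integral_mul F K hF hK := by
    have hscaled := h.integral_mul (hF.comp (contDiff_const_smul a))
      (hK.comp (lipschitzWith_smul a))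
    simp only [Function.comp_def, smul_eq_mul, deriv_comp_mul_left] at hscaled
    simp only [mul_assoc, integral_const_mul, hscaled]
    simp only [← integral_const_mul]
    exact integral_congr_ae (ae_of_all _ fun ω => by ring)

lemma zero : HasSteinKernel (0 : Ω → ℝ) 0 P :=
  ⟨MemLp.zero, integrable_zero _ _ _, fun F K _ _ => by simp⟩

variable [IsProbabilityMeasure P]

lemma integral_mul_add (h : HasSteinKernel X T P) (hX' : MemLp X' 2 P)
    (hind : IndepFun (fun ω => (X ω, T ω)) X' P) {F : ℝ → ℝ} {K : ℝ≥0} (hF : ContDiff ℝ 1 F)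
    (hK : LipschitzWith K F) :
    ∫ ω, X ω * F (X ω + X' ω) ∂P = ∫ ω, T ω * deriv F (X ω + X' ω) ∂P := by
  have hpair := h.memLp.1.aemeasurable.prodMk h.integrable.1.aemeasurable
  have hjoint := hpair.prodMk hX'.1.aemeasurable
  have hlaw := (indepFun_iff_map_prod_eq_prod_map_map hpair hX'.1.aemeasurable).1 hind
  have hfubini : ∀ {g : (ℝ × ℝ) × ℝ → ℝ}, Measurable g →
      Integrable (fun ω => g ((X ω, T ω), X' ω)) P →
      ∫ ω, g ((X ω, T ω), X' ω) ∂P = ∫ y, ∫ ω, g ((X ω, T ω), y) ∂P ∂P.map X' := by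
    intro g hg hgi
    rw [← integral_map hjoint hg.aestronglyMeasurable, hlaw, integral_prod_symm]
    · exact integral_congr_ae (ae_of_all _ fun y => integral_map hpair
        (hg.comp measurable_prodMk_right).aestronglyMeasurable)
    · rw [← hlaw]
      exact (integrable_map_measure hg.aestronglyMeasurable hjoint).2 hgi
  have hFc := hF.continuous.measurable
  have : Measurable (deriv F) := hF.continuous_deriv_one.measurable
  have hsum := h.memLp.add hX'
  rw [hfubini (g := fun z => z.1.1 * F (z.1.1 + z.2)) (by fun_prop)
      (h.memLp.integrable_mul (memLp_comp_of_lipschitzWith hK hsum)),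
    hfubini (g := fun z => z.1.2 * deriv F (z.1.1 + z.2)) (by fun_prop)
      (integrable_mul_deriv_comp hF hK hsum.1 h.integrable)]
  refine integral_congr_ae (ae_of_all _ fun y => ?_)
  have htranslated := h.integral_mul (F := fun x => F (x + y)) (by fun_prop)
    (hK.comp (LipschitzWith.id.add (LipschitzWith.const y)))
  simpa only [deriv_comp_add_const] using htranslated

lemma add (h : HasSteinKernel X T P) (h' : HasSteinKernel X' T' P)
    (hind : IndepFun (fun ω => (X ω, T ω)) (fun ω => (X' ω, T' ω)) P) :
    HasSteinKernel (X + X') (T + T') P where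
  memLp := h.memLp.add h'.memLp
  integrable := h.integrable.add h'.integrable
  integral_mul F K hF hK := by
    have hsum := h.memLp.add h'.memLp
    have hFsum : MemLp (fun ω => F (X ω + X' ω)) 2 P := memLp_comp_of_lipschitzWith hK hsum
    have hi : Integrable (fun ω => X ω * F (X ω + X' ω)) P := h.memLp.integrable_mul hFsum
    have hi' : Integrable (fun ω => X' ω * F (X ω + X' ω)) P := h'.memLp.integrable_mul hFsum
    have hleft := h.integral_mul_add h'.memLp (hind.comp measurable_id measurable_fst) hF hK
    have hright := h'.integral_mul_add h.memLp (hind.symm.comp measurable_id measurable_fst) hF hK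
    simp only [add_comm (X' _)] at hright
    simp only [Pi.add_apply, add_mul]
    rw [integral_add hi hi', hleft, hright]
    exact (integral_add (integrable_mul_deriv_comp hF hK hsum.1 h.integrable)
      (integrable_mul_deriv_comp hF hK hsum.1 h'.integrable)).symm

lemma sum {ι : Type*} {X T : ι → Ω → ℝ} (h : ∀ i, HasSteinKernel (X i) (T i) P)
    (hind : iIndepFun (fun i ω => (X i ω, T i ω)) P) (s : Finset ι) :
    HasSteinKernel (∑ i ∈ s, X i) (∑ i ∈ s, T i) P := by
  classical
  induction s using Finset.induction_on with
  | empty => simpa only [Finset.sum_empty] using HasSteinKernel.zero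
  | insert i s hi ih =>
    rw [Finset.sum_insert hi, Finset.sum_insert hi]
    refine (h i).add ih ?_
    have hsum := hind.indepFun_finsetSum_of_notMem₀
      (fun j => (h j).memLp.1.aemeasurable.prodMk (h j).integrable.1.aemeasurable) hi
    convert hsum.symm using 1
    funext ω
    simp only [Finset.sum_apply, Prod.fst_sum, Prod.snd_sum, Prod.ext_iff, and_self]

lemma abs_integral_comp_sub_le (hX : HasSteinKernel X T P) {v : ℝ≥0} (hv : 0 < v) {h : ℝ → ℝ}
    {K : ℝ≥0} (hh : LipschitzWith K h) :
    |(∫ ω, h (X ω) ∂P) - ∫ x, h x ∂gaussianReal 0 v| ≤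
      3 * K * √(4 * Real.pi / v) * ∫ ω, |v - T ω| ∂P := by
  have hf := contDiff_steinSolution hv.ne' hh
  have hfK := lipschitzWith_steinSolution hv hh
  have hXm := hX.memLp.1
  have hf'i := integrable_mul_deriv_comp hf hfK hXm (integrable_const (v : ℝ))
  have hTf'i := integrable_mul_deriv_comp hf hfK hXm hX.integrable
  have hXf : Integrable (fun ω => X ω * steinSolution h v (X ω)) P :=
    hX.memLp.integrable_mul (memLp_comp_of_lipschitzWith hfK hX.memLp)
  have hstein : (∫ ω, h (X ω) ∂P) - ∫ x, h x ∂gaussianReal 0 v =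
      ∫ ω, (v - T ω) * deriv (steinSolution h v) (X ω) ∂P := by
    calc (∫ ω, h (X ω) ∂P) - ∫ x, h x ∂gaussianReal 0 v
        = ∫ ω, (h (X ω) - ∫ x, h x ∂gaussianReal 0 v) ∂P := by
          rw [integral_sub ((memLp_comp_of_lipschitzWith hh hX.memLp).integrable one_le_two)
            (integrable_const _), integral_const, probReal_univ, one_smul]
      _ = ∫ ω, (v * deriv (steinSolution h v) (X ω) - X ω * steinSolution h v (X ω)) ∂P :=
          integral_congr_ae (ae_of_all _ fun ω => (mul_deriv_steinSolution_sub hv.ne' hh _).symm)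
      _ = ∫ ω, (v - T ω) * deriv (steinSolution h v) (X ω) ∂P := by
          simp only [sub_mul]
          rw [integral_sub hf'i hXf, integral_sub hf'i hTf'i, hX.integral_mul hf hfK]
  rw [hstein, ← integral_const_mul]
  refine (abs_integral_le_integral_abs).trans (integral_mono_of_nonneg
    (ae_of_all _ fun ω => abs_nonneg _)
    (((integrable_const _).sub hX.integrable).abs.const_mul _) (ae_of_all _ fun ω => ?_))
  dsimp only
  rw [abs_mul, mul_comm]
  exact mul_le_mul_of_nonneg_right (abs_deriv_steinSolution_le hv hh _) (abs_nonneg _)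

end HasSteinKernel

end SteinKernel

section GaussianSquares

lemma integral_abs_sub_le {Ω : Type*} {mΩ : MeasurableSpace Ω} {P : Measure Ω}
    [IsProbabilityMeasure P] {T : Ω → ℝ} (hT : MemLp T 2 P) (c : ℝ) :
    ∫ ω, |c - T ω| ∂P ≤ √(Var[T; P]) + |c - P[T]| := by
  have hcentred : MemLp (fun ω => T ω - P[T]) 2 P := hT.sub (memLp_const _)
  have hi := (hcentred.integrable one_le_two).abs
  calc ∫ ω, |c - T ω| ∂P
      ≤ ∫ ω, (|T ω - P[T]| + |c - P[T]|) ∂P :=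
        integral_mono (((integrable_const c).sub (hT.integrable one_le_two)).abs)
          (hi.add (integrable_const _)) fun ω => by
            rw [abs_sub_comm (T ω), add_comm]
            exact abs_sub_le c P[T] (T ω)
    _ = (∫ ω, |T ω - P[T]| ∂P) + |c - P[T]| := by
        rw [integral_add hi (integrable_const _), integral_const, probReal_univ, one_smul]
    _ ≤ √(Var[T; P]) + |c - P[T]| := by
        rw [variance_eq_integral hT.1.aemeasurable]
        gcongr
        exact integral_abs_le_sqrt_integral_sq hcentred

lemma variance_sq_gaussianReal (v : ℝ≥0) : Var[fun x => x ^ 2; gaussianReal 0 v] = 2 * v ^ 2 := by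
  rw [variance_eq_sub (memLp_two_pow_gaussianReal 2)]
  simp only [Pi.pow_apply, ← pow_mul, Nat.reduceMul]
  rw [integral_pow_four_gaussianReal, integral_sq_gaussianReal]
  ring

lemma memLp_sq_of_hasLaw_gaussianReal {Ω : Type*} {_ : MeasurableSpace Ω} {P : Measure Ω}
    {Y : Ω → ℝ} {v : ℝ≥0} (hY : HasLaw Y (gaussianReal 0 v) P) : MemLp (fun ω => Y ω ^ 2) 2 P :=
  (hY.map_eq ▸ memLp_two_pow_gaussianReal 2 : MemLp (fun x => x ^ 2) 2 (P.map Y))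
    |>.comp_of_map hY.aemeasurable

variable {Ω ι : Type*} {mΩ : MeasurableSpace Ω} {P : Measure Ω} [Fintype ι]
  {Y : ι → Ω → ℝ} {v : ι → ℝ≥0}

lemma variance_sum_two_mul_sq (hY : ∀ j, HasLaw (Y j) (gaussianReal 0 (v j)) P)
    (hind : iIndepFun Y P) :
    Var[fun ω => ∑ j, 2 * v j * Y j ω ^ 2; P] = 8 * ∑ j, (v j : ℝ) ^ 4 := by
  have hsum := IndepFun.variance_sum (μ := P) (s := Finset.univ)
    (X := fun j ω => 2 * v j * Y j ω ^ 2)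
    (fun j _ => (memLp_sq_of_hasLaw_gaussianReal (hY j)).const_mul _) fun i _ j _ hij =>
      (hind.indepFun hij).comp
        (by fun_prop : Measurable fun y : ℝ => 2 * (v i : ℝ) * y ^ 2)
        (by fun_prop : Measurable fun y : ℝ => 2 * (v j : ℝ) * y ^ 2)
  rw [Finset.sum_fn] at hsum
  rw [hsum, Finset.mul_sum]
  refine Finset.sum_congr rfl fun j _ => ?_
  have hsq : Var[fun ω => Y j ω ^ 2; P] = 2 * (v j : ℝ) ^ 2 := by
    have hmap := variance_map (μ := P) (X := fun x : ℝ => x ^ 2) (by fun_prop) (hY j).aemeasurable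
    rw [(hY j).map_eq, variance_sq_gaussianReal] at hmap
    exact hmap.symm
  rw [variance_const_mul, hsq]
  ring

variable [IsProbabilityMeasure P]

lemma hasSteinKernel_sum_sq_sub (hY : ∀ j, HasLaw (Y j) (gaussianReal 0 (v j)) P)
    (hind : iIndepFun Y P) (a : ℝ) :
    HasSteinKernel (fun ω => a * ∑ j, (Y j ω ^ 2 - v j))
      (fun ω => a ^ 2 * ∑ j, 2 * v j * Y j ω ^ 2) P := by
  have hsum := (HasSteinKernel.sum
    (fun j => (hasSteinKernel_sq_sub_gaussianReal (v j)).comp_hasLaw (hY j))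
    (hind.comp (fun j y => (y ^ 2 - (v j : ℝ), 2 * v j * y ^ 2)) fun j => by fun_prop)
    Finset.univ).const_mul a
  simpa only [Finset.sum_apply] using hsum

lemma integral_sum_two_mul_sq (hY : ∀ j, HasLaw (Y j) (gaussianReal 0 (v j)) P) :
    ∫ ω, ∑ j, 2 * v j * Y j ω ^ 2 ∂P = 2 * ∑ j, (v j : ℝ) ^ 2 := by
  rw [integral_finsetSum _ fun j _ =>
    ((memLp_sq_of_hasLaw_gaussianReal (hY j)).integrable one_le_two).const_mul _, Finset.mul_sum]
  refine Finset.sum_congr rfl fun j _ => ?_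
  have hsq := (hY j).integral_comp (f := fun x => x ^ 2) (by fun_prop)
  simp only [Function.comp_def, integral_sq_gaussianReal] at hsq
  rw [integral_const_mul, hsq]
  ring

/-- Stein's method: the kernel `a² ∑ 2 vⱼ Yⱼ²` has mean `2 a² ∑ vⱼ²` and variance `8 a⁴ ∑ vⱼ⁴`. -/
lemma abs_integral_sum_sq_sub_le (hY : ∀ j, HasLaw (Y j) (gaussianReal 0 (v j)) P)
    (hind : iIndepFun Y P) (a : ℝ) {u : ℝ≥0} (hu : 0 < u) {h : ℝ → ℝ} {K : ℝ≥0}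
    (hh : LipschitzWith K h) :
    |(∫ ω, h (a * ∑ j, (Y j ω ^ 2 - v j)) ∂P) - ∫ x, h x ∂gaussianReal 0 u| ≤
      3 * K * √(4 * Real.pi / u) *
        (√(8 * a ^ 4 * ∑ j, (v j : ℝ) ^ 4) + |u - 2 * a ^ 2 * ∑ j, (v j : ℝ) ^ 2|) := by
  refine ((hasSteinKernel_sum_sq_sub hY hind a).abs_integral_comp_sub_le hu hh).trans ?_
  have hT : MemLp (fun ω => a ^ 2 * ∑ j, 2 * v j * Y j ω ^ 2) 2 P := (memLp_finsetSum _
    fun j _ => (memLp_sq_of_hasLaw_gaussianReal (hY j)).const_mul _).const_mul _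
  have hbound := integral_abs_sub_le hT u
  rw [variance_const_mul, variance_sum_two_mul_sq hY hind, integral_const_mul,
    integral_sum_two_mul_sq hY] at hbound
  refine mul_le_mul_of_nonneg_left (hbound.trans_eq ?_) (by positivity)
  ring_nf

end GaussianSquares

section SineTest

lemma log_one_sub_mul_I (x : ℝ) :
    Complex.log (1 - x * Complex.I) =
      (Real.log (1 + x ^ 2) / 2 : ℝ) - (Real.arctan x : ℝ) * Complex.I := by
  have hnorm : ‖1 - x * Complex.I‖ = √(1 + x ^ 2) := by
    rw [Complex.norm_def, Complex.normSq_apply]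
    congr 1
    simp only [Complex.sub_re, Complex.one_re, Complex.re_ofReal_mul, Complex.I_re, mul_zero,
      sub_zero, Complex.sub_im, Complex.one_im, Complex.im_ofReal_mul, Complex.I_im, mul_one,
      zero_sub]
    ring
  have harg : (1 - x * Complex.I).arg = -Real.arctan x := by
    rw [Complex.arg_of_re_nonneg (by simp), hnorm, Real.arctan_eq_arcsin, ← Real.arcsin_neg]
    simp [neg_div]
  rw [Complex.log, hnorm, harg, Real.log_sqrt (by positivity)]
  push_cast
  ring

lemma integral_cexp_mul_sq_gaussianReal {v : ℝ≥0} {z : ℂ} (hz : 2 * v * z.re < 1) :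
    ∫ y : ℝ, Complex.exp (z * y ^ 2) ∂gaussianReal 0 v =
      Complex.exp (-Complex.log (1 - 2 * v * z) / 2) := by
  rcases eq_or_ne v 0 with rfl | hv
  · simp
  have : (0 : ℝ) < v := by positivity
  have hvc : (v : ℂ) ≠ 0 := by exact_mod_cast hv
  have hre : 0 < (1 - 2 * v * z).re := by simpa [mul_assoc] using hz
  have hne : 1 - 2 * v * z ≠ 0 := fun h => by simp [h] at hre
  set b : ℂ := (1 - 2 * v * z) / (2 * v : ℝ) with hb
  have hbre : 0 < b.re := by
    rw [hb, Complex.div_ofReal_re]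
    positivity
  have hdensity : ∀ y : ℝ, gaussianPDFReal 0 v y • Complex.exp (z * y ^ 2) =
      ((√(2 * Real.pi * v))⁻¹ : ℝ) * Complex.exp (-b * y ^ 2) := by
    intro y
    rw [gaussianPDFReal, Complex.real_smul, Complex.ofReal_mul, Complex.ofReal_exp, mul_assoc,
      ← Complex.exp_add]
    congr 2
    rw [hb]
    push_cast
    field_simp
    ring
  have hroot : ((Real.pi : ℂ) / b) ^ (1 / 2 : ℂ) =
      (√(2 * Real.pi * v) : ℝ) * Complex.exp (-Complex.log (1 - 2 * v * z) / 2) := by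
    have hpv : 0 < 2 * Real.pi * v := by positivity
    have hdiv : (Real.pi : ℂ) / b = (2 * Real.pi * v : ℝ) * (1 - 2 * v * z)⁻¹ := by
      rw [hb]
      push_cast
      field_simp
    rw [hdiv, Complex.cpow_def_of_ne_zero
        (mul_ne_zero (by exact_mod_cast hpv.ne') (inv_ne_zero hne)),
      Complex.log_ofReal_mul hpv (inv_ne_zero hne),
      Complex.log_inv _ (Complex.slitPlane_arg_ne_pi (Or.inl hre)), add_mul, Complex.exp_add,
      Real.sqrt_eq_rpow, Real.rpow_def_of_pos hpv]
    push_cast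
    ring_nf
  rw [integral_gaussianReal_eq_integral_smul hv]
  simp only [hdensity]
  rw [integral_const_mul, integral_gaussian_complex hbre, hroot, ← mul_assoc, ← Complex.ofReal_mul,
    inv_mul_cancel₀ (by positivity), Complex.ofReal_one, one_mul]

lemma sub_arctan_le {x : ℝ} (hx : 0 ≤ x) : x - Real.arctan x ≤ x ^ 3 / 3 := by
  have hmono : MonotoneOn (fun y : ℝ => y ^ 3 / 3 - (y - Real.arctan y)) (Set.Ici 0) := by
    refine monotoneOn_of_hasDerivWithinAt_nonneg (f' := fun y => y ^ 2 - (1 - 1 / (1 + y ^ 2)))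
      (convex_Ici 0) (by fun_prop) (fun y _ => ?_) fun y _ => ?_
    · exact (((hasDerivAt_pow 3 y).div_const 3).sub
        ((hasDerivAt_id y).sub (Real.hasDerivAt_arctan y))).congr_deriv
          (by norm_num) |>.hasDerivWithinAt
    · rw [show y ^ 2 - (1 - 1 / (1 + y ^ 2)) = y ^ 4 / (1 + y ^ 2) by field_simp; ring]
      positivity
  simpa using hmono Set.self_mem_Ici hx hx

lemma le_sub_arctan {x : ℝ} (hx : 0 ≤ x) (hx1 : x ≤ 1) : x ^ 3 / 6 ≤ x - Real.arctan x := by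
  have hmono : MonotoneOn (fun y : ℝ => y - Real.arctan y - y ^ 3 / 6) (Set.Icc 0 1) := by
    refine monotoneOn_of_hasDerivWithinAt_nonneg (f' := fun y => 1 - 1 / (1 + y ^ 2) - y ^ 2 / 2)
      (convex_Icc 0 1) (by fun_prop) (fun y _ => ?_) fun y hy => ?_
    · exact (((hasDerivAt_id y).sub (Real.hasDerivAt_arctan y)).sub
        ((hasDerivAt_pow 3 y).div_const 6)).congr_deriv (by norm_num; ring) |>.hasDerivWithinAt
    · rw [interior_Icc] at hy
      have hy2 : 0 ≤ 1 - y ^ 2 := by nlinarith [hy.1, hy.2]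
      rw [show 1 - 1 / (1 + y ^ 2) - y ^ 2 / 2 = y ^ 2 * (1 - y ^ 2) / (2 * (1 + y ^ 2)) by
        field_simp; ring]
      positivity
  simpa using hmono (Set.left_mem_Icc.2 zero_le_one) ⟨hx, hx1⟩ hx

lemma half_le_sin {x : ℝ} (hx : 0 ≤ x) (hx1 : x ≤ 1) : x / 2 ≤ Real.sin x := by
  refine le_trans ?_ (Real.mul_le_sin hx (by linarith [Real.pi_gt_three]))
  rw [div_eq_mul_one_div, mul_comm]
  refine mul_le_mul_of_nonneg_right ?_ hx
  rw [div_le_div_iff₀ two_pos Real.pi_pos]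
  linarith [Real.pi_le_four]

variable {ι : Type*} [Fintype ι]

lemma sum_pow_three_le_exp_mul_sin {x : ι → ℝ} (hx : ∀ j, 0 ≤ x j) (hsq : ∑ j, x j ^ 2 ≤ 1) :
    (∑ j, x j ^ 3) / 32 ≤ Real.exp (-∑ j, Real.log (1 + x j ^ 2) / 4) *
      Real.sin (∑ j, (x j - Real.arctan (x j)) / 2) := by
  have hx1 : ∀ j, x j ≤ 1 := fun j => by
    rw [← sq_le_one_iff₀ (hx j)]
    exact (Finset.single_le_sum (fun j _ => sq_nonneg (x j)) (Finset.mem_univ j)).trans hsq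
  have hcube : ∑ j, x j ^ 3 ≤ 1 := (Finset.sum_le_sum fun j _ =>
    pow_le_pow_of_le_one (hx j) (hx1 j) (by norm_num)).trans hsq
  have hlog : ∑ j, Real.log (1 + x j ^ 2) / 4 ≤ 1 / 4 := by
    rw [← Finset.sum_div]
    refine div_le_div_of_nonneg_right ((Finset.sum_le_sum fun j _ => ?_).trans hsq) (by norm_num)
    linarith [Real.log_le_sub_one_of_pos (show 0 < 1 + x j ^ 2 by positivity)]
  set B := ∑ j, (x j - Real.arctan (x j)) / 2
  have hBupper : B ≤ (∑ j, x j ^ 3) / 6 := by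
    rw [Finset.sum_div]
    exact Finset.sum_le_sum fun j _ => by linarith [sub_arctan_le (hx j)]
  have hBlower : (∑ j, x j ^ 3) / 12 ≤ B := by
    rw [Finset.sum_div]
    exact Finset.sum_le_sum fun j _ => by linarith [le_sub_arctan (hx j) (hx1 j)]
  have : 0 ≤ ∑ j, x j ^ 3 := Finset.sum_nonneg fun j _ => pow_nonneg (hx j) 3
  have hexp : 3 / 4 ≤ Real.exp (-∑ j, Real.log (1 + x j ^ 2) / 4) :=
    le_trans (by linarith) (Real.add_one_le_exp _)
  have hsin : B / 2 ≤ Real.sin B := half_le_sin (by linarith) (by linarith)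
  calc (∑ j, x j ^ 3) / 32 ≤ 3 / 4 * (B / 2) := by linarith
    _ ≤ _ := mul_le_mul hexp hsin (by linarith) (Real.exp_nonneg _)

variable {Ω : Type*} {mΩ : MeasurableSpace Ω} {P : Measure Ω} {Y : ι → Ω → ℝ}
  {v : ι → ℝ≥0}

lemma integral_cexp_sum_sq_sub (hY : ∀ j, HasLaw (Y j) (gaussianReal 0 (v j)) P)
    (hind : iIndepFun Y P) (s : ℝ) :
    ∫ ω, Complex.exp ((s * ∑ j, (Y j ω ^ 2 - v j) : ℝ) * Complex.I) ∂P =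
      Complex.exp (∑ j, (-Complex.log (1 - (2 * s * v j : ℝ) * Complex.I) / 2 -
        s * v j * Complex.I)) := by
  have hfactor : ∀ ω, Complex.exp ((s * ∑ j, (Y j ω ^ 2 - v j) : ℝ) * Complex.I) =
      ∏ j, Complex.exp (s * Complex.I * Y j ω ^ 2) * Complex.exp (-(s * v j * Complex.I)) := by
    intro ω
    simp only [← Complex.exp_add]
    rw [← Complex.exp_sum, Finset.mul_sum]
    push_cast
    rw [Finset.sum_mul]
    exact congrArg _ (Finset.sum_congr rfl fun j _ => by ring)
  simp only [hfactor]
  rw [hind.integral_fun_prod_comp (fun j => (hY j).aemeasurable)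
    (f := fun j (y : ℝ) => Complex.exp (s * Complex.I * y ^ 2) *
      Complex.exp (-(s * v j * Complex.I)))
    (fun j => by fun_prop), Complex.exp_sum]
  refine Finset.prod_congr rfl fun j _ => ?_
  have hsq := (hY j).integral_comp (f := fun y : ℝ => Complex.exp (s * Complex.I * y ^ 2))
    (by fun_prop)
  simp only [Function.comp_def] at hsq
  rw [integral_mul_const, hsq, integral_cexp_mul_sq_gaussianReal (by simp), ← Complex.exp_add,
    sub_eq_add_neg]
  push_cast
  ring_nf

variable [IsProbabilityMeasure P]

lemma integral_sin_sum_sq_sub (hY : ∀ j, HasLaw (Y j) (gaussianReal 0 (v j)) P)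
    (hind : iIndepFun Y P) (s : ℝ) :
    ∫ ω, Real.sin (s * ∑ j, (Y j ω ^ 2 - v j)) ∂P =
      -(Real.exp (-∑ j, Real.log (1 + (2 * s * v j) ^ 2) / 4) *
        Real.sin (∑ j, (2 * s * v j - Real.arctan (2 * s * v j)) / 2)) := by
  have hYm := fun j => (hY j).aemeasurable
  have hint : Integrable
      (fun ω => Complex.exp ((s * ∑ j, (Y j ω ^ 2 - v j) : ℝ) * Complex.I)) P :=
    Integrable.of_bound (C := 1) (AEMeasurable.aestronglyMeasurable (by fun_prop))
      (ae_of_all _ fun ω => (Complex.norm_exp_ofReal_mul_I _).le)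
  have him := Complex.imCLM.integral_comp_comm hint
  simp only [Complex.imCLM_apply, Complex.exp_ofReal_mul_I_im] at him
  have hterm : ∀ j, -Complex.log (1 - (2 * s * v j : ℝ) * Complex.I) / 2 - s * v j * Complex.I =
      (-(Real.log (1 + (2 * s * v j) ^ 2) / 4) : ℝ) +
        (-((2 * s * v j - Real.arctan (2 * s * v j)) / 2) : ℝ) * Complex.I := fun j => by
    rw [log_one_sub_mul_I]
    push_cast
    ring
  rw [him, integral_cexp_sum_sq_sub hY hind, Complex.exp_im, ← mul_neg, ← Real.sin_neg,
    Complex.re_sum, Complex.im_sum, ← Finset.sum_neg_distrib, ← Finset.sum_neg_distrib]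
  simp only [hterm, Complex.add_re, Complex.add_im, Complex.ofReal_re, Complex.ofReal_im,
    Complex.re_ofReal_mul, Complex.im_ofReal_mul, Complex.I_re, Complex.I_im, mul_zero, add_zero,
    mul_one, zero_add]

lemma sum_pow_three_le_abs_integral_sin (hY : ∀ j, HasLaw (Y j) (gaussianReal 0 (v j)) P)
    (hind : iIndepFun Y P) {s : ℝ} (hs : 0 ≤ s) (hsq : ∑ j, (2 * s * v j) ^ 2 ≤ 1) :
    (∑ j, (2 * s * v j) ^ 3) / 32 ≤ |∫ ω, Real.sin (s * ∑ j, (Y j ω ^ 2 - v j)) ∂P| := by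
  rw [integral_sin_sum_sq_sub hY hind, abs_neg]
  exact (sum_pow_three_le_exp_mul_sin (fun j => by positivity) hsq).trans (le_abs_self _)

lemma integral_eq_zero_of_odd_gaussianReal {h : ℝ → ℝ} (hh : ∀ x, h (-x) = -h x) (v : ℝ≥0) :
    ∫ x, h x ∂gaussianReal 0 v = 0 := by
  have hflip := integral_comp_neg_gaussianReal (v := v) h
  simp only [hh, integral_neg] at hflip
  linarith

lemma lipschitzWith_mul_sin {b : ℝ} (hb : 0 < b) :
    LipschitzWith 1 fun x => b * Real.sin (b⁻¹ * x) := by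
  refine LipschitzWith.of_dist_le_mul fun x y => ?_
  have hsin := Real.abs_sin_sub_sin_le (b⁻¹ * x) (b⁻¹ * y)
  rw [← mul_sub, abs_mul, abs_of_pos (inv_pos.2 hb)] at hsin
  rw [Real.dist_eq, Real.dist_eq, ← mul_sub, abs_mul, abs_of_pos hb, NNReal.coe_one, one_mul]
  exact (mul_le_mul_of_nonneg_left hsin hb.le).trans_eq (mul_inv_cancel_left₀ hb.ne' _)

end SineTest

section PrincipalComponents

open Matrix

variable {ι : Type*} {Ω : Type*} {mΩ : MeasurableSpace Ω} {P : Measure Ω} {X : ι → Ω → ℝ}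

/-- The matrix of covariances of the coordinates of a random vector. -/
def covarianceMatrix (X : ι → Ω → ℝ) (P : Measure Ω) : Matrix ι ι ℝ :=
  Matrix.of fun i j => cov[X i, X j; P]

lemma isHermitian_covarianceMatrix (X : ι → Ω → ℝ) (P : Measure Ω) :
    (covarianceMatrix X P).IsHermitian :=
  Matrix.ext fun _ _ => covariance_comm _ _

variable [Fintype ι]

lemma hasGaussianLaw_of_map_sum_mul_eq_gaussianReal (hX : ∀ i, Measurable (X i))
    (h : ∀ a : ι → ℝ, ∃ m v, P.map (fun ω => ∑ i, a i * X i ω) = gaussianReal m v) :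
    HasGaussianLaw (fun ω i => X i ω) P := by
  classical
  refine ⟨isGaussian_of_map_eq_gaussianReal fun L => ?_⟩
  rw [Measure.map_map (by fun_prop) (by fun_prop)]
  obtain ⟨m, v, hv⟩ := h fun i => L (Pi.single i 1)
  refine ⟨m, v, hv ▸ congrArg P.map (funext fun ω => ?_)⟩
  conv_lhs => rw [Function.comp_apply, pi_eq_sum_univ' (fun i => X i ω), map_sum]
  simp only [map_smul, smul_eq_mul, mul_comm]

variable [DecidableEq ι]

lemma eigenvalues_le_of_row_sum_abs_le {C : Matrix ι ι ℝ} (hC : C.IsHermitian) {Λ : ℝ}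
    (hΛ : ∀ i, ∑ j, |C i j| ≤ Λ) (j : ι) : hC.eigenvalues j ≤ Λ := by
  have hj : Module.End.HasEigenvalue (toLin' C) (hC.eigenvalues j) := by
    rw [Module.End.hasEigenvalue_iff_mem_spectrum, spectrum_toLin']
    exact hC.eigenvalues_mem_spectrum_real j
  obtain ⟨k, hk⟩ := eigenvalue_mem_ball hj
  rw [Metric.mem_closedBall, Real.dist_eq] at hk
  calc hC.eigenvalues j ≤ C k k + |hC.eigenvalues j - C k k| := by
        linarith [le_abs_self (hC.eigenvalues j - C k k)]
    _ ≤ |C k k| + ∑ i ∈ Finset.univ.erase k, |C k i| := add_le_add (le_abs_self _) hk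
    _ = ∑ i, |C k i| := Finset.add_sum_erase _ (fun i => |C k i|) (Finset.mem_univ k)
    _ ≤ Λ := hΛ k

lemma sum_eigenvalues_sq {C : Matrix ι ι ℝ} (hC : C.IsHermitian) :
    ∑ j, hC.eigenvalues j ^ 2 = ∑ i, ∑ j, C i j ^ 2 := by
  have htrace : trace (C * C) = trace (diagonal hC.eigenvalues * diagonal hC.eigenvalues) := by
    conv_lhs => rw [hC.spectral_theorem, ← map_mul, Unitary.conjStarAlgAut_apply,
      trace_mul_comm, ← mul_assoc, Unitary.coe_star_mul_self, one_mul]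
    rfl
  rw [diagonal_mul_diagonal, trace_diagonal] at htrace
  simp_rw [sq, ← htrace, trace, diag, mul_apply]
  exact Finset.sum_congr rfl fun i _ => Finset.sum_congr rfl fun j _ => by
    rw [show C j i = C i j by simpa using hC.apply i j]

/-- The coordinates of a random vector in an orthonormal eigenbasis of its covariance matrix. -/
def principalComponent (X : ι → Ω → ℝ) (P : Measure Ω) (j : ι) (ω : Ω) : ℝ :=
  inner ℝ ((isHermitian_covarianceMatrix X P).eigenvectorBasis j) (WithLp.toLp 2 fun i => X i ω)

/-- The variances of the principal components, i.e. the eigenvalues of the covariance matrix. -/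
def principalVariance (X : ι → Ω → ℝ) (P : Measure Ω) (j : ι) : ℝ≥0 :=
  ((isHermitian_covarianceMatrix X P).eigenvalues j).toNNReal

lemma principalComponent_eq_sum (X : ι → Ω → ℝ) (P : Measure Ω) (j : ι) :
    principalComponent X P j = fun ω =>
      ∑ i, (isHermitian_covarianceMatrix X P).eigenvectorBasis j i * X i ω := by
  funext ω
  simp only [principalComponent, PiLp.inner_apply, Real.inner_apply]

lemma sum_principalComponent_sq (X : ι → Ω → ℝ) (P : Measure Ω) (ω : Ω) :
    ∑ j, principalComponent X P j ω ^ 2 = ∑ i, X i ω ^ 2 := by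
  have h := (isHermitian_covarianceMatrix X P).eigenvectorBasis.sum_sq_norm_inner_right
    (WithLp.toLp 2 fun i => X i ω)
  simpa only [principalComponent, EuclideanSpace.real_norm_sq_eq, Real.norm_eq_abs, sq_abs] using h

lemma covariance_principalComponent [IsFiniteMeasure P] (hX : ∀ i, MemLp (X i) 2 P) (j k : ι) :
    cov[principalComponent X P j, principalComponent X P k; P] =
      if j = k then (isHermitian_covarianceMatrix X P).eigenvalues j else 0 := by
  set hC := isHermitian_covarianceMatrix X P
  have hquad : cov[principalComponent X P j, principalComponent X P k; P] =
      hC.eigenvectorBasis j ⬝ᵥ (covarianceMatrix X P *ᵥ hC.eigenvectorBasis k) := by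
    rw [principalComponent_eq_sum, principalComponent_eq_sum,
      covariance_fun_sum_fun_sum (fun i => (hX i).const_mul _) fun i => (hX i).const_mul _]
    simp_rw [covariance_const_mul_left, covariance_const_mul_right, dotProduct, mulVec, dotProduct,
      Finset.mul_sum]
    exact Finset.sum_congr rfl fun i _ => Finset.sum_congr rfl fun l _ => by
      rw [show covarianceMatrix X P i l = cov[X i, X l; P] from rfl]; ring
  have horth := orthonormal_iff_ite.1 hC.eigenvectorBasis.orthonormal k j
  rw [EuclideanSpace.inner_eq_star_dotProduct, star_trivial] at horth
  rw [hquad, hC.mulVec_eigenvectorBasis, dotProduct_smul, horth, smul_eq_mul]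
  by_cases hjk : j = k
  · simp [hjk]
  · simp [hjk, Ne.symm hjk]

lemma variance_principalComponent [IsFiniteMeasure P] (hX : ∀ i, MemLp (X i) 2 P) (j : ι) :
    Var[principalComponent X P j; P] = (isHermitian_covarianceMatrix X P).eigenvalues j := by
  have hY : AEMeasurable (principalComponent X P j) P := by
    rw [principalComponent_eq_sum]
    exact Finset.aemeasurable_fun_sum _ fun i _ => (hX i).aemeasurable.const_mul _
  rw [← covariance_self hY, covariance_principalComponent hX, if_pos rfl]

lemma coe_principalVariance [IsFiniteMeasure P] (hX : ∀ i, MemLp (X i) 2 P) (j : ι) :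
    (principalVariance X P j : ℝ) = (isHermitian_covarianceMatrix X P).eigenvalues j :=
  Real.coe_toNNReal _ (variance_principalComponent hX j ▸ variance_nonneg _ _)

lemma hasGaussianLaw_principalComponent (hX : HasGaussianLaw (fun ω i => X i ω) P) :
    HasGaussianLaw (fun ω j => principalComponent X P j ω) P :=
  hX.map_fun (ContinuousLinearMap.pi fun j =>
    (innerSL ℝ ((isHermitian_covarianceMatrix X P).eigenvectorBasis j)).comp
      (PiLp.continuousLinearEquiv 2 ℝ fun _ : ι => ℝ).symm.toContinuousLinearMap)

lemma iIndepFun_principalComponent (hX : HasGaussianLaw (fun ω i => X i ω) P) :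
    iIndepFun (principalComponent X P) P := by
  have := hX.isProbabilityMeasure
  refine (hasGaussianLaw_principalComponent hX).iIndepFun_of_covariance_eq_zero fun j k hjk => ?_
  rw [covariance_principalComponent fun i => (hX.eval i).memLp_two, if_neg hjk]

lemma hasLaw_principalComponent (hX : HasGaussianLaw (fun ω i => X i ω) P)
    (h0 : ∀ i, ∫ ω, X i ω ∂P = 0) (j : ι) :
    HasLaw (principalComponent X P j) (gaussianReal 0 (principalVariance X P j)) P := by
  have := hX.isProbabilityMeasure
  have hj := (hasGaussianLaw_principalComponent hX).eval j
  refine ⟨hj.aemeasurable, ?_⟩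
  have hmean : ∫ ω, principalComponent X P j ω ∂P = 0 := by
    simp only [principalComponent_eq_sum]
    rw [integral_finsetSum _ fun i _ => (hX.eval i).integrable.const_mul _]
    simp only [integral_const_mul, h0, mul_zero, Finset.sum_const_zero]
  rw [hj.map_eq_gaussianReal, hmean, variance_principalComponent fun i => (hX.eval i).memLp_two,
    principalVariance]

lemma principalVariance_le_of_row_sum_abs_le [IsFiniteMeasure P] (hX : ∀ i, MemLp (X i) 2 P)
    {Λ : ℝ} (hΛ : ∀ i, ∑ j, |cov[X i, X j; P]| ≤ Λ) (j : ι) : principalVariance X P j ≤ Λ :=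
  (coe_principalVariance hX j).trans_le (eigenvalues_le_of_row_sum_abs_le _ hΛ j)

lemma sum_principalVariance [IsFiniteMeasure P] (hX : ∀ i, MemLp (X i) 2 P) :
    ∑ j, (principalVariance X P j : ℝ) = ∑ i, cov[X i, X i; P] := by
  simp_rw [coe_principalVariance hX]
  exact (isHermitian_covarianceMatrix X P).trace_eq_sum_eigenvalues.symm

lemma sum_principalVariance_sq [IsFiniteMeasure P] (hX : ∀ i, MemLp (X i) 2 P) :
    ∑ j, (principalVariance X P j : ℝ) ^ 2 = ∑ i, ∑ j, cov[X i, X j; P] ^ 2 := by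
  simp_rw [coe_principalVariance hX]
  exact sum_eigenvalues_sq _

end PrincipalComponents

section SecondDifferences

lemma sum_range_mul_second_difference (b : ℕ → ℝ) (N : ℕ) :
    ∑ k ∈ Finset.range N, ((k : ℝ) + 1) * (b (k + 2) - 2 * b (k + 1) + b k) =
      b 0 + N * (b (N + 1) - b N) - b N := by
  induction N with
  | zero => simp
  | succ N ih => rw [Finset.sum_range_succ, ih]; push_cast; ring

lemma le_of_convex_of_bddAbove {b : ℕ → ℝ} (hb : BddAbove (Set.range b))
    (hconv : ∀ k, 0 ≤ b (k + 2) - 2 * b (k + 1) + b k) (N : ℕ) : b (N + 1) ≤ b N := by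
  obtain ⟨M, hM⟩ := hb
  have hmono : Monotone fun k => b (k + 1) - b k :=
    monotone_nat_of_le_succ fun k => by linarith [hconv k]
  have hlinear (m : ℕ) : b N + m * (b (N + 1) - b N) ≤ b (N + m) := by
    induction m with
    | zero => simp
    | succ m ih =>
      have h : b (N + 1) - b N ≤ b (N + m + 1) - b (N + m) := hmono (Nat.le_add_right N m)
      rw [← add_assoc]
      push_cast
      linarith
  by_contra! hlt
  obtain ⟨m, hm⟩ := exists_nat_gt ((M - b N) / (b (N + 1) - b N))
  rw [div_lt_iff₀ (sub_pos.2 hlt)] at hm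
  linarith [hlinear m, hM ⟨N + m, rfl⟩]

lemma summable_mul_second_difference_of_convex {b : ℕ → ℝ} {M : ℝ} (hb : ∀ k, |b k| ≤ M)
    (hconv : ∀ k, 0 ≤ b (k + 2) - 2 * b (k + 1) + b k) :
    Summable fun k : ℕ => ((k : ℝ) + 1) * (b (k + 2) - 2 * b (k + 1) + b k) := by
  refine summable_of_sum_range_le (c := 2 * M) (fun k => mul_nonneg (by positivity) (hconv k))
    fun N => ?_
  have hanti : b (N + 1) ≤ b N := le_of_convex_of_bddAbove
    ⟨M, Set.forall_mem_range.2 fun k => (abs_le.1 (hb k)).2⟩ hconv N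
  rw [sum_range_mul_second_difference]
  linarith [(abs_le.1 (hb 0)).2, (abs_le.1 (hb N)).1,
    mul_nonpos_of_nonneg_of_nonpos (Nat.cast_nonneg (α := ℝ) N) (sub_nonpos.2 hanti)]

lemma summable_mul_abs_second_difference {b : ℕ → ℝ} {M : ℝ} (hb : ∀ k, |b k| ≤ M)
    (hsign : ∃ K, (∀ k, K ≤ k → 0 ≤ b (k + 2) - 2 * b (k + 1) + b k) ∨
      ∀ k, K ≤ k → b (k + 2) - 2 * b (k + 1) + b k ≤ 0) :
    Summable fun k : ℕ => ((k : ℝ) + 1) * |b (k + 2) - 2 * b (k + 1) + b k| := by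
  obtain ⟨K, hK⟩ := hsign
  wlog hpos : ∀ k, K ≤ k → 0 ≤ b (k + 2) - 2 * b (k + 1) + b k generalizing b
  · have hneg (k : ℕ) : -b (k + 2) - 2 * -b (k + 1) + -b k =
        -(b (k + 2) - 2 * b (k + 1) + b k) := by ring
    have hK' : ∀ k, K ≤ k → 0 ≤ -b (k + 2) - 2 * -b (k + 1) + -b k := fun k hk => by
      rw [hneg]; exact neg_nonneg.2 (hK.resolve_left hpos k hk)
    simpa only [hneg, abs_neg] using this (b := fun k => -b k)
      (fun k => (abs_neg _).trans_le (hb k)) (Or.inl hK') hK'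
  have hshift := summable_mul_second_difference_of_convex (b := fun k => b (k + K))
    (fun k => hb _) fun k => by
      simpa only [add_right_comm] using hpos (k + K) (Nat.le_add_left K k)
  rw [← summable_nat_add_iff K]
  refine (hshift.mul_left ((K : ℝ) + 1)).of_nonneg_of_le (fun k => by positivity) fun k => ?_
  have h := hpos (k + K) (Nat.le_add_left K k)
  simp only [add_right_comm k _ K]
  rw [abs_of_nonneg h, ← mul_assoc]
  refine mul_le_mul_of_nonneg_right ?_ h
  push_cast
  nlinarith [mul_nonneg (Nat.cast_nonneg (α := ℝ) K) (Nat.cast_nonneg (α := ℝ) k)]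

end SecondDifferences

section WeightedSummability

variable {g : ℤ → ℝ}

lemma summable_of_summable_abs_mul (hg : Summable fun j : ℤ => |(j : ℝ)| * |g j|) :
    Summable g := by
  refine hg.of_norm_bounded_eventually ?_
  filter_upwards [(Set.finite_singleton (0 : ℤ)).compl_mem_cofinite] with j hj
  exact le_mul_of_one_le_left (abs_nonneg _) (by exact_mod_cast Int.one_le_abs hj)

lemma sum_shift_le_tsum (hg : Summable g) (h0 : ∀ j, 0 ≤ g j) (s : Finset ℤ) (i : ℤ) :
    ∑ k ∈ s, g (k - i) ≤ ∑' j, g j := by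
  rw [← (Equiv.subRight i).tsum_eq g]
  exact ((Equiv.subRight i).summable_iff.2 hg).sum_le_tsum s fun j _ => h0 _

lemma hasSum_ite_add_mem (g : ℤ → ℝ) (s : Finset ℤ) (i : ℤ) :
    HasSum (fun j => if j + i ∈ s then g j else 0) (∑ k ∈ s, g (k - i)) := by
  rw [← (Equiv.subRight i).hasSum_iff]
  have h : HasSum (fun k => if k ∈ s then g (k - i) else 0)
      (∑ k ∈ s, if k ∈ s then g (k - i) else 0) :=
    hasSum_sum_of_ne_finset_zero fun k hk => if_neg hk
  rw [Finset.sum_congr rfl fun k hk => if_pos hk] at h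
  simpa only [Function.comp_def, Equiv.subRight_apply, sub_add_cancel] using h

lemma card_filter_add_notMem_Ico_le (n : ℕ) (j : ℤ) :
    (((Finset.Ico (0 : ℤ) n).filter fun i => j + i ∉ Finset.Ico (0 : ℤ) n).card : ℤ) ≤ |j| := by
  obtain ⟨a, hsub⟩ : ∃ a, ((Finset.Ico (0 : ℤ) n).filter fun i => j + i ∉ Finset.Ico (0 : ℤ) n) ⊆
      Finset.Ico a (a + |j|) := by
    rcases le_total 0 j with hj | hj
    · refine ⟨n - j, fun i hi => ?_⟩
      simp only [Finset.mem_filter, Finset.mem_Ico, abs_of_nonneg hj] at hi ⊢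
      omega
    · refine ⟨0, fun i hi => ?_⟩
      simp only [Finset.mem_filter, Finset.mem_Ico, abs_of_nonpos hj] at hi ⊢
      omega
  have hcard := Finset.card_le_card hsub
  rw [Int.card_Ico, add_sub_cancel_left] at hcard
  exact (Int.ofNat_le.2 hcard).trans_eq (Int.toNat_of_nonneg (abs_nonneg j))

lemma abs_sum_sum_shift_sub_le (h0 : ∀ j, 0 ≤ g j) (hg : Summable fun j : ℤ => |(j : ℝ)| * g j)
    (n : ℕ) :
    |∑ i ∈ Finset.Ico (0 : ℤ) n, ∑ k ∈ Finset.Ico (0 : ℤ) n, g (k - i) - n * ∑' j, g j| ≤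
      ∑' j : ℤ, |(j : ℝ)| * g j := by
  set s := Finset.Ico (0 : ℤ) n
  have hgs : Summable g := summable_of_summable_abs_mul (by simpa only [abs_of_nonneg (h0 _)])
  have hmissing (i : ℤ) :
      HasSum (fun j => if j + i ∉ s then g j else 0) (∑' j, g j - ∑ k ∈ s, g (k - i)) := by
    refine (hgs.hasSum.sub (hasSum_ite_add_mem g s i)).congr_fun fun j => ?_
    split_ifs <;> simp
  have hsum := hasSum_sum fun i (_ : i ∈ s) => hmissing i
  have hcount (j : ℤ) : ∑ i ∈ s, (if j + i ∉ s then g j else 0) =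
      (s.filter fun i => j + i ∉ s).card * g j := by
    rw [← Finset.sum_filter, Finset.sum_const, nsmul_eq_mul]
  simp only [hcount, Finset.sum_sub_distrib, Finset.sum_const, nsmul_eq_mul] at hsum
  rw [show s.card = n by simp [s]] at hsum
  rw [abs_sub_comm, abs_of_nonneg (hsum.nonneg fun j => mul_nonneg (Nat.cast_nonneg _) (h0 j))]
  refine hasSum_le (fun j => mul_le_mul_of_nonneg_right ?_ (h0 j)) hsum hg.hasSum
  exact_mod_cast card_filter_add_notMem_Ico_le n j

end WeightedSummability

section WeakStationarity

variable {Ω : Type*} {mΩ : MeasurableSpace Ω} {P : Measure Ω} {V : ℤ → Ω → ℝ} {q : ℤ → ℝ}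

/-- A square-integrable sequence with shift-invariant second moments `E[V_j V_k] = q (k - j)`.
Unlike `IsCSG`, which asks for `0 < q 0`, this notion is stable under finite differences. -/
structure IsSecondOrderStationary (V : ℤ → Ω → ℝ) (q : ℤ → ℝ) (P : Measure Ω) : Prop where
  memLp : ∀ k, MemLp (V k) 2 P
  integral_mul : ∀ j k, ∫ ω, V j ω * V k ω ∂P = q (k - j)

namespace IsSecondOrderStationary

lemma apply_neg (hV : IsSecondOrderStationary V q P) (k : ℤ) : q (-k) = q k := by
  have h1 := hV.integral_mul k 0
  have h2 := hV.integral_mul 0 k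
  rw [zero_sub] at h1
  rw [sub_zero] at h2
  rw [← h1, ← h2]
  exact integral_congr_ae (ae_of_all _ fun ω => mul_comm _ _)

lemma abs_le (hV : IsSecondOrderStationary V q P) (k : ℤ) : |q k| ≤ q 0 := by
  have hint (i j : ℤ) : Integrable (fun ω => V i ω * V j ω) P :=
    (hV.memLp i).integrable_mul (hV.memLp j)
  have hsq (i : ℤ) : ∫ ω, V i ω * V i ω ∂P = q 0 := by rw [hV.integral_mul, sub_self]
  calc |q k| = |∫ ω, V 0 ω * V k ω ∂P| := by rw [hV.integral_mul, sub_zero]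
    _ ≤ ∫ ω, |V 0 ω * V k ω| ∂P := abs_integral_le_integral_abs
    _ ≤ ∫ ω, (V 0 ω * V 0 ω + V k ω * V k ω) / 2 ∂P :=
        integral_mono (hint 0 k).abs (((hint 0 0).add (hint k k)).div_const 2) fun ω => by
          rw [abs_mul]
          nlinarith [sq_nonneg (|V 0 ω| - |V k ω|), abs_mul_abs_self (V 0 ω),
            abs_mul_abs_self (V k ω)]
    _ = q 0 := by
        rw [integral_div, integral_add (hint 0 0) (hint k k), hsq, hsq, add_self_div_two]

lemma increment (hV : IsSecondOrderStationary V q P) :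
    IsSecondOrderStationary (fun k ω => V (k + 1) ω - V k ω)
      (fun k => 2 * q k - q (k + 1) - q (k - 1)) P where
  memLp k := (hV.memLp (k + 1)).sub (hV.memLp k)
  integral_mul j k := by
    have hint (a b : ℤ) : Integrable (fun ω => V a ω * V b ω) P :=
      (hV.memLp a).integrable_mul (hV.memLp b)
    have hint' (a b c d : ℤ) : Integrable (fun ω => V a ω * V b ω + V c ω * V d ω) P :=
      (hint a b).add (hint c d)
    have hexpand (ω : Ω) : (V (j + 1) ω - V j ω) * (V (k + 1) ω - V k ω) =
        (V (j + 1) ω * V (k + 1) ω + V j ω * V k ω) -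
          (V (j + 1) ω * V k ω + V j ω * V (k + 1) ω) := by ring
    simp_rw [hexpand]
    rw [integral_sub (hint' _ _ _ _) (hint' _ _ _ _), integral_add (hint _ _) (hint _ _),
      integral_add (hint _ _) (hint _ _)]
    simp only [hV.integral_mul]
    rw [add_sub_add_right_eq_sub, show k - (j + 1) = k - j - 1 by ring,
      show k + 1 - j = k - j + 1 by ring]
    ring

lemma exists_fdiff {Ω : Type*} [MeasureSpace Ω] {V : ℤ → Ω → ℝ} {q : ℤ → ℝ}
    (hV : IsSecondOrderStationary V q ℙ) (m : ℕ) :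
    ∃ qm, IsSecondOrderStationary (fdiff m V) qm ℙ := by
  induction m with
  | zero => exact ⟨q, hV⟩
  | succ m ih => obtain ⟨qm, hqm⟩ := ih; exact ⟨_, hqm.increment⟩

lemma covariance_unique {q' : ℤ → ℝ} (hV : IsSecondOrderStationary V q P)
    (hV' : IsSecondOrderStationary V q' P) : q = q' :=
  funext fun k => by rw [← sub_zero k, ← hV.integral_mul, hV'.integral_mul]

/-- Up to sign the covariance of the increments is a second difference of a bounded sequence. -/
lemma summable_mul_abs_of_increment {ρ : ℤ → ℝ} (hV : IsSecondOrderStationary V q P)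
    (hρ : IsSecondOrderStationary (fun k ω => V (k + 1) ω - V k ω) ρ P)
    (hsign : ∃ K : ℕ, (∀ k : ℕ, K ≤ k → 0 ≤ ρ k) ∨ ∀ k : ℕ, K ≤ k → ρ k ≤ 0) :
    Summable fun j : ℤ => |(j : ℝ)| * |ρ j| := by
  have hdiff (k : ℕ) : q (k + 2 : ℕ) - 2 * q (k + 1 : ℕ) + q k = -ρ (k + 1 : ℕ) := by
    rw [hρ.covariance_unique hV.increment]
    push_cast
    rw [add_sub_cancel_right, add_assoc, one_add_one_eq_two]
    ring
  obtain ⟨K, hK⟩ := hsign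
  have hnat : Summable fun k : ℕ => |(k : ℝ)| * |ρ k| := by
    rw [← summable_nat_add_iff 1]
    have h := summable_mul_abs_second_difference (b := fun k : ℕ => q k) (fun k => hV.abs_le k)
      ⟨K, hK.symm.imp (fun h k hk => ?_) fun h k hk => ?_⟩
    · simp only [hdiff, abs_neg] at h
      exact h.congr fun k => by rw [Nat.abs_cast, Nat.cast_add_one k (R := ℝ)]
    · exact (hdiff k).symm ▸ neg_nonneg.2 (h _ (Nat.le_succ_of_le hk))
    · exact (hdiff k).symm ▸ neg_nonpos.2 (h _ (Nat.le_succ_of_le hk))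
  exact .of_nat_of_neg (by simpa using hnat) (by simpa [hρ.apply_neg] using hnat)

end IsSecondOrderStationary

end WeakStationarity

section GaussianSequences

variable {X : ℤ → Ω → ℝ} {ρ : ℤ → ℝ}

lemma IsCSG.hasGaussianLaw (hX : IsCSG X ρ) (s : Finset ℤ) :
    HasGaussianLaw (fun ω (i : s) => X i ω) ℙ := by
  refine hasGaussianLaw_of_map_sum_mul_eq_gaussianReal (fun i => hX.1 i) fun a => ?_
  obtain ⟨v, hv⟩ := hX.2.1 s fun k => if hk : k ∈ s then a ⟨k, hk⟩ else 0
  refine ⟨0, v, hv ▸ congrArg (Measure.map · ℙ) (funext fun ω => ?_)⟩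
  rw [← Finset.sum_coe_sort s]
  simp

lemma IsCSG.memLp (hX : IsCSG X ρ) (k : ℤ) : MemLp (X k) 2 ℙ :=
  ((hX.hasGaussianLaw {k}).eval ⟨k, Finset.mem_singleton_self k⟩).memLp_two

lemma IsCSG.isSecondOrderStationary (hX : IsCSG X ρ) : IsSecondOrderStationary X ρ ℙ :=
  ⟨hX.memLp, hX.2.2.1⟩

lemma IsCSG.integral_eq_zero (hX : IsCSG X ρ) (k : ℤ) : ∫ ω, X k ω = 0 := by
  obtain ⟨v, hv⟩ := hX.2.1 {k} fun _ => 1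
  simp only [Finset.sum_singleton, one_mul] at hv
  calc ∫ ω, X k ω = ∫ x, x ∂(Measure.map (X k) ℙ) :=
        (integral_map (hX.1 k).aemeasurable aestronglyMeasurable_id).symm
    _ = 0 := by rw [show Measure.map (X k) ℙ = gaussianReal 0 v from hv, integral_id_gaussianReal]

lemma IsCSG.covariance (hX : IsCSG X ρ) (j k : ℤ) : cov[X j, X k; ℙ] = ρ (k - j) := by
  rw [ProbabilityTheory.covariance, hX.integral_eq_zero, hX.integral_eq_zero]
  simpa only [sub_zero] using hX.2.2.1 j k

/-- The vector of the first `n` observations, on which the quadratic variation depends. -/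
def observations (X : ℤ → Ω → ℝ) (n : ℕ) (i : Finset.Ico (0 : ℤ) n) (ω : Ω) : ℝ := X i ω

lemma measurable_U2 (hX : ∀ k, Measurable (X k)) (r0 : ℝ) (n : ℕ) :
    Measurable (U2 X r0 n) := by
  unfold U2 Qvar f2
  fun_prop

/-- The variances of the principal components of the first `n` observations. -/
def observedVariance (X : ℤ → Ω → ℝ) (n : ℕ) (j : Finset.Ico (0 : ℤ) n) : ℝ≥0 :=
  principalVariance (observations X n) ℙ j

lemma IsCSG.memLp_observations (hX : IsCSG X ρ) (n : ℕ) (i : Finset.Ico (0 : ℤ) n) :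
    MemLp (observations X n i) 2 ℙ := hX.memLp i

lemma IsCSG.covariance_observations (hX : IsCSG X ρ) (n : ℕ) (i j : Finset.Ico (0 : ℤ) n) :
    cov[observations X n i, observations X n j; ℙ] = ρ (j - i) := hX.covariance i j

lemma IsCSG.tsum_abs_pos (hX : IsCSG X ρ) (hρ : Summable fun j => |ρ j|) : 0 < ∑' j, |ρ j| :=
  hρ.tsum_pos (fun _ => abs_nonneg _) 0 (abs_pos.2 hX.2.2.2.ne')

lemma IsCSG.summable_mul_sq (hX : IsCSG X ρ) (hρ : Summable fun j : ℤ => |(j : ℝ)| * |ρ j|) :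
    Summable fun j : ℤ => |(j : ℝ)| * ρ j ^ 2 := by
  refine .of_nonneg_of_le (fun j => by positivity) (fun j => ?_) (hρ.mul_left (ρ 0))
  rw [← sq_abs, mul_left_comm, sq]
  gcongr
  exact hX.isSecondOrderStationary.abs_le j

lemma IsCSG.hasLaw_principalComponent_observations (hX : IsCSG X ρ) (n : ℕ)
    (j : Finset.Ico (0 : ℤ) n) :
    HasLaw (principalComponent (observations X n) ℙ j)
      (gaussianReal 0 (observedVariance X n j)) ℙ :=
  hasLaw_principalComponent (hX.hasGaussianLaw _) (fun i => hX.integral_eq_zero i) j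

variable [IsProbabilityMeasure (ℙ : Measure Ω)]

lemma IsCSG.sum_observedVariance (hX : IsCSG X ρ) (n : ℕ) :
    ∑ j, (observedVariance X n j : ℝ) = n * ρ 0 := by
  unfold observedVariance
  rw [sum_principalVariance (hX.memLp_observations n)]
  simp [hX.covariance_observations]

lemma IsCSG.sum_observedVariance_sq (hX : IsCSG X ρ) (n : ℕ) :
    ∑ j, (observedVariance X n j : ℝ) ^ 2 =
      ∑ i ∈ Finset.Ico (0 : ℤ) n, ∑ k ∈ Finset.Ico (0 : ℤ) n, ρ (k - i) ^ 2 := by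
  unfold observedVariance
  rw [sum_principalVariance_sq (hX.memLp_observations n)]
  simp only [hX.covariance_observations]
  rw [← Finset.sum_coe_sort (Finset.Ico (0 : ℤ) n)]
  exact Finset.sum_congr rfl fun i _ =>
    Finset.sum_coe_sort (Finset.Ico (0 : ℤ) n) fun k => ρ (k - i) ^ 2

lemma IsCSG.observedVariance_le (hX : IsCSG X ρ) (hρ : Summable fun j => |ρ j|) (n : ℕ)
    (j : Finset.Ico (0 : ℤ) n) : (observedVariance X n j : ℝ) ≤ ∑' k, |ρ k| := by
  refine principalVariance_le_of_row_sum_abs_le (hX.memLp_observations n) (fun i => ?_) j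
  simp only [hX.covariance_observations]
  rw [Finset.sum_coe_sort (Finset.Ico (0 : ℤ) n) fun k => |ρ (k - i)|]
  exact sum_shift_le_tsum hρ (fun _ => abs_nonneg _) _ _

lemma IsCSG.U2_eq_sum_principalComponent (hX : IsCSG X ρ) (n : ℕ) :
    U2 X (ρ 0) n = fun ω => (√n)⁻¹ * ∑ j, (principalComponent (observations X n) ℙ j ω ^ 2 -
      observedVariance X n j) := by
  funext ω
  have hobs : ∑ i : Finset.Ico (0 : ℤ) n, observations X n i ω ^ 2 =
      ∑ i ∈ Finset.range n, X i ω ^ 2 := by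
    calc ∑ i : Finset.Ico (0 : ℤ) n, X i ω ^ 2 = ∑ k ∈ Finset.Ico (0 : ℤ) n, X k ω ^ 2 :=
          Finset.sum_coe_sort (Finset.Ico (0 : ℤ) n) fun k => X k ω ^ 2
      _ = ∑ i ∈ Finset.range n, X i ω ^ 2 := by
          simp [Int.Ico_eq_finset_map]
  have hsqrt : √(n : ℝ) * (1 / n) = (√n)⁻¹ := by
    rw [mul_one_div, Real.sqrt_div_self', one_div]
  have hsqrt' : (√n)⁻¹ * n = √(n : ℝ) := by rw [inv_mul_eq_div, Real.div_sqrt]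
  rw [Finset.sum_sub_distrib, sum_principalComponent_sq, hX.sum_observedVariance, hobs, mul_sub,
    ← mul_assoc, hsqrt', U2, Qvar, mul_sub, ← mul_assoc, hsqrt]
  rfl

lemma IsCSG.sum_observedVariance_pow_four_le (hX : IsCSG X ρ) (hρ : Summable fun j => |ρ j|)
    (n : ℕ) : ∑ j, (observedVariance X n j : ℝ) ^ 4 ≤ n * (∑' j, |ρ j|) ^ 4 := by
  calc ∑ j, (observedVariance X n j : ℝ) ^ 4
    _ ≤ ∑ _j : Finset.Ico (0 : ℤ) n, (∑' j, |ρ j|) ^ 4 := Finset.sum_le_sum fun j _ =>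
        pow_le_pow_left₀ (NNReal.coe_nonneg _) (hX.observedVariance_le hρ n j) 4
    _ = n * (∑' j, |ρ j|) ^ 4 := by simp

lemma IsCSG.abs_sum_observedVariance_sq_sub_le (hX : IsCSG X ρ)
    (hρ : Summable fun j : ℤ => |(j : ℝ)| * |ρ j|) (n : ℕ) :
    |∑ j, (observedVariance X n j : ℝ) ^ 2 - n * ∑' j, ρ j ^ 2| ≤
      ∑' j : ℤ, |(j : ℝ)| * ρ j ^ 2 := by
  rw [hX.sum_observedVariance_sq]
  exact abs_sum_sum_shift_sub_le (fun j => sq_nonneg (ρ j)) (hX.summable_mul_sq hρ) n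

lemma IsCSG.integral_map_U2 (hX : IsCSG X ρ) (n : ℕ) {h : ℝ → ℝ} (hh : Continuous h) :
    ∫ x, h x ∂Measure.map (U2 X (ρ 0) n) ℙ = ∫ ω, h ((√n)⁻¹ *
      ∑ j, (principalComponent (observations X n) ℙ j ω ^ 2 - observedVariance X n j)) := by
  rw [integral_map (measurable_U2 hX.1 _ _).aemeasurable hh.aestronglyMeasurable,
    hX.U2_eq_sum_principalComponent]

lemma IsCSG.abs_integral_map_U2_sub_le (hX : IsCSG X ρ)
    (hρ : Summable fun j : ℤ => |(j : ℝ)| * |ρ j|) {u : ℝ≥0} (hu : (u : ℝ) = 2 * ∑' j, ρ j ^ 2)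
    (hu0 : 0 < u) {n : ℕ} (hn : 1 ≤ n) {h : ℝ → ℝ} (hh : LipschitzWith 1 h) :
    |(∫ x, h x ∂Measure.map (U2 X (ρ 0) n) ℙ) - ∫ x, h x ∂gaussianReal 0 u| ≤
      3 * √(4 * Real.pi / u) * (√(8 * (∑' j, |ρ j|) ^ 4) + 2 * ∑' j : ℤ, |(j : ℝ)| * ρ j ^ 2) /
        √n := by
  set Λ := ∑' j, |ρ j|
  set M := ∑' j : ℤ, |(j : ℝ)| * ρ j ^ 2
  have hn0 : (0 : ℝ) < n := by exact_mod_cast hn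
  have hsq : (√(n : ℝ))⁻¹ ^ 2 = (n : ℝ)⁻¹ := by rw [inv_pow, Real.sq_sqrt hn0.le]
  have hsqrt_le : √(n : ℝ) ≤ n := Real.sqrt_le_self_iff.2 (.inr (by exact_mod_cast hn))
  have hfluctuation : √(8 * (√(n : ℝ))⁻¹ ^ 4 * ∑ j, (observedVariance X n j : ℝ) ^ 4) ≤
      √(8 * Λ ^ 4) / √n := by
    rw [← Real.sqrt_div (by positivity), show (√(n : ℝ))⁻¹ ^ 4 = (n : ℝ)⁻¹ ^ 2 by
      rw [← hsq]; ring]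
    refine Real.sqrt_le_sqrt ((mul_le_mul_of_nonneg_left (hX.sum_observedVariance_pow_four_le
      (summable_of_summable_abs_mul (by simpa only [abs_abs])) n) (by positivity)).trans_eq ?_)
    field_simp
    rfl
  have hbias : |(u : ℝ) - 2 * (√(n : ℝ))⁻¹ ^ 2 * ∑ j, (observedVariance X n j : ℝ) ^ 2| ≤
      2 * M / √n := by
    have hfactor : (u : ℝ) - 2 * (√(n : ℝ))⁻¹ ^ 2 * ∑ j, (observedVariance X n j : ℝ) ^ 2 =
        -(2 / n) * (∑ j, (observedVariance X n j : ℝ) ^ 2 - n * ∑' j, ρ j ^ 2) := by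
      rw [hu, hsq]
      field_simp
      ring
    calc |(u : ℝ) - 2 * (√(n : ℝ))⁻¹ ^ 2 * ∑ j, (observedVariance X n j : ℝ) ^ 2|
      _ = 2 / n * |∑ j, (observedVariance X n j : ℝ) ^ 2 - n * ∑' j, ρ j ^ 2| := by
          rw [hfactor, abs_mul, abs_neg, abs_of_pos (by positivity)]
      _ ≤ 2 / √n * M := by gcongr; exact hX.abs_sum_observedVariance_sq_sub_le hρ n
      _ = 2 * M / √n := by ring
  rw [hX.integral_map_U2 n hh.continuous]
  calc _ ≤ _ := abs_integral_sum_sq_sub_le (hX.hasLaw_principalComponent_observations n)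
        (iIndepFun_principalComponent (hX.hasGaussianLaw _)) (√n)⁻¹ hu0 hh
    _ ≤ 3 * (1 : ℝ≥0) * √(4 * Real.pi / u) * (√(8 * Λ ^ 4) / √n + 2 * M / √n) := by gcongr
    _ = _ := by rw [NNReal.coe_one]; ring

lemma IsCSG.le_sum_observedVariance_pow_three (hX : IsCSG X ρ) (n : ℕ) :
    n * ρ 0 ^ 3 ≤ ∑ j, (observedVariance X n j : ℝ) ^ 3 := by
  have hmean := pow_sum_div_card_le_sum_pow (s := Finset.univ)
    (f := fun j => (observedVariance X n j : ℝ)) (fun j _ => NNReal.coe_nonneg _) 2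
  rw [hX.sum_observedVariance, Finset.card_univ, Fintype.card_coe, Int.card_Ico, sub_zero,
    Int.toNat_natCast] at hmean
  refine (Eq.le ?_).trans hmean
  rcases eq_or_ne (n : ℝ) 0 with hn | hn
  · simp [hn]
  · field_simp
    ring

lemma IsCSG.exists_le_abs_integral_map_U2_sub (hX : IsCSG X ρ) (hρ : Summable fun j => |ρ j|)
    (u : ℝ≥0) {n : ℕ} (hn : 1 ≤ n) :
    ∃ h : ℝ → ℝ, LipschitzWith 1 h ∧ (∑' j, |ρ j|) / 16 * (ρ 0 / ∑' j, |ρ j|) ^ 3 / √n ≤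
      |(∫ x, h x ∂Measure.map (U2 X (ρ 0) n) ℙ) - ∫ x, h x ∂gaussianReal 0 u| := by
  have hΛ := hX.tsum_abs_pos hρ
  set Λ := ∑' j, |ρ j|
  have hn0 : (0 : ℝ) < n := by exact_mod_cast hn
  set s := (2 * Λ)⁻¹ * (√(n : ℝ))⁻¹ with hs
  have hs0 : 0 ≤ s := by positivity
  have hsΛ : 2 * s * Λ = (√(n : ℝ))⁻¹ := by rw [hs]; field_simp
  have hle (j : Finset.Ico (0 : ℤ) n) : 2 * s * observedVariance X n j ≤ (√(n : ℝ))⁻¹ :=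
    hsΛ ▸ mul_le_mul_of_nonneg_left (hX.observedVariance_le hρ n j) (by positivity)
  have hsq : ∑ j, (2 * s * observedVariance X n j) ^ 2 ≤ 1 := by
    calc ∑ j, (2 * s * observedVariance X n j) ^ 2
      _ ≤ ∑ _j : Finset.Ico (0 : ℤ) n, (√(n : ℝ))⁻¹ ^ 2 :=
          Finset.sum_le_sum fun j _ => pow_le_pow_left₀ (by positivity) (hle j) 2
      _ = 1 := by simp [hn0.ne']
  refine ⟨fun x => 2 * Λ * Real.sin ((2 * Λ)⁻¹ * x), lipschitzWith_mul_sin (by positivity), ?_⟩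
  rw [integral_eq_zero_of_odd_gaussianReal (fun x => by rw [mul_neg, Real.sin_neg, mul_neg]),
    sub_zero, integral_const_mul, abs_mul, abs_of_pos (by positivity),
    hX.integral_map_U2 n (h := fun x => Real.sin ((2 * Λ)⁻¹ * x)) (by fun_prop)]
  simp only [← mul_assoc, ← hs]
  calc Λ / 16 * (ρ 0 / Λ) ^ 3 / √n = 2 * Λ * ((2 * s) ^ 3 * (n * ρ 0 ^ 3) / 32) := by
        rw [eq_div_of_mul_eq hΛ.ne' hsΛ, div_pow, div_pow, inv_pow]
        field_simp
        rw [Real.sq_sqrt hn0.le]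
        ring
    _ ≤ 2 * Λ * ((2 * s) ^ 3 * (∑ j, (observedVariance X n j : ℝ) ^ 3) / 32) := by
        gcongr
        exact hX.le_sum_observedVariance_pow_three n
    _ = 2 * Λ * ((∑ j, (2 * s * observedVariance X n j : ℝ) ^ 3) / 32) := by
        simp only [mul_pow, Finset.mul_sum]
    _ ≤ _ := by
        gcongr
        exact sum_pow_three_le_abs_integral_sin (hX.hasLaw_principalComponent_observations n)
          (iIndepFun_principalComponent (hX.hasGaussianLaw _)) hs0 hsq

lemma IsCSG.exists_dW_map_U2_bounds (hX : IsCSG X ρ)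
    (hρ : Summable fun j : ℤ => |(j : ℝ)| * |ρ j|) :
    ∃ c₀ > (0 : ℝ), ∃ C₀ > (0 : ℝ), ∀ n : ℕ, 1 ≤ n →
      c₀ / √n ≤ dW (Measure.map (U2 X (ρ 0) n) ℙ)
          (gaussianReal 0 (Real.toNNReal (2 * ∑' j : ℤ, ρ j ^ 2))) ∧
        dW (Measure.map (U2 X (ρ 0) n) ℙ)
          (gaussianReal 0 (Real.toNNReal (2 * ∑' j : ℤ, ρ j ^ 2))) ≤ C₀ / √n := by
  have hr0 : 0 < ρ 0 := hX.2.2.2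
  have hρ1 : Summable fun j => |ρ j| := summable_of_summable_abs_mul (by simpa only [abs_abs])
  have hρ2 : Summable fun j => ρ j ^ 2 :=
    summable_of_summable_abs_mul (by simpa only [abs_sq] using hX.summable_mul_sq hρ)
  have hΛ := hX.tsum_abs_pos hρ1
  have hpos : 0 < 2 * ∑' j, ρ j ^ 2 :=
    mul_pos two_pos (hρ2.tsum_pos (fun _ => sq_nonneg _) 0 (pow_pos hr0 2))
  have : 0 ≤ ∑' j : ℤ, |(j : ℝ)| * ρ j ^ 2 := tsum_nonneg fun j => by positivity
  have hu : ((2 * ∑' j, ρ j ^ 2).toNNReal : ℝ) = 2 * ∑' j, ρ j ^ 2 := Real.coe_toNNReal _ hpos.le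
  have hu0 := Real.toNNReal_pos.2 hpos
  refine ⟨(∑' j, |ρ j|) / 16 * (ρ 0 / ∑' j, |ρ j|) ^ 3, by positivity,
    3 * √(4 * Real.pi / (2 * ∑' j, ρ j ^ 2).toNNReal) *
      (√(8 * (∑' j, |ρ j|) ^ 4) + 2 * ∑' j : ℤ, |(j : ℝ)| * ρ j ^ 2), by positivity,
    fun n hn => ?_⟩
  have hbound (h : {h : ℝ → ℝ // LipschitzWith 1 h}) :=
    hX.abs_integral_map_U2_sub_le hρ hu hu0 hn h.2
  obtain ⟨h, hh, hle⟩ := hX.exists_le_abs_integral_map_U2_sub hρ1 _ hn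
  exact ⟨hle.trans (le_ciSup ⟨_, Set.forall_mem_range.2 hbound⟩ ⟨h, hh⟩),
    haveI : Nonempty {h : ℝ → ℝ // LipschitzWith 1 h} := ⟨⟨id, LipschitzWith.id⟩⟩
    ciSup_le hbound⟩

end GaussianSequences

theorem statement_16_general
    {Ω : Type*} [MeasureSpace Ω] [IsProbabilityMeasure (ℙ : Measure Ω)]
    (Z : ℤ → Ω → ℝ) (r : ℤ → ℝ) (hZ : IsCSG Z r) (p : ℕ) (hp : 1 ≤ p)
    (rp : ℤ → ℝ) (hZp : IsCSG (fdiff p Z) rp)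
    (hsign : ∃ K : ℕ, (∀ k : ℕ, K ≤ k → 0 ≤ rp k) ∨ ∀ k : ℕ, K ≤ k → rp k ≤ 0) :
    ∃ c₀ > (0 : ℝ), ∃ C₀ > (0 : ℝ), ∀ n : ℕ, 1 ≤ n →
      c₀ / Real.sqrt n ≤
          dW (Measure.map (U2 (fdiff p Z) (rp 0) n) (ℙ : Measure Ω))
            (gaussianReal 0 (Real.toNNReal (2 * ∑' j : ℤ, (rp j) ^ 2))) ∧
        dW (Measure.map (U2 (fdiff p Z) (rp 0) n) (ℙ : Measure Ω))
            (gaussianReal 0 (Real.toNNReal (2 * ∑' j : ℤ, (rp j) ^ 2))) ≤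
          C₀ / Real.sqrt n := by
  obtain ⟨m, rfl⟩ := Nat.exists_eq_add_of_le' hp
  obtain ⟨qm, hqm⟩ := hZ.isSecondOrderStationary.exists_fdiff m
  exact hZp.exists_dW_map_U2_bounds
    (hqm.summable_mul_abs_of_increment hZp.isSecondOrderStationary hsign)

/-- optimal Berry–Esséen rate `1/√n` in Wasserstein distance for
the quadratic variation of the `p`-th finite difference. -/
theorem statement_16
    {Ω : Type*} [MeasureSpace Ω] [IsProbabilityMeasure (ℙ : Measure Ω)]
    (Z : ℤ → Ω → ℝ) (r : ℤ → ℝ) (hZ : IsCSG Z r)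
    (α c : ℝ) (hα : 0 < α)
    (hc : Filter.Tendsto (fun k : ℕ => (k : ℝ) ^ α * r k) Filter.atTop (nhds c))
    (p : ℕ) (hp : 1 ≤ p)
    (rp : ℤ → ℝ) (hZp : IsCSG (fdiff p Z) rp) (hrp0 : 0 < rp 0)
    (hmono : ∃ K : ℕ,
      ((∀ k : ℕ, K ≤ k → 0 ≤ rp k) ∨ (∀ k : ℕ, K ≤ k → rp k ≤ 0)) ∧
      ((∀ k : ℕ, K ≤ k → |rp (k + 1)| ≤ |rp k|) ∨
        (∀ k : ℕ, K ≤ k → |rp k| ≤ |rp (k + 1)|))) :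
    ∃ c₀ > (0 : ℝ), ∃ C₀ > (0 : ℝ), ∀ n : ℕ, 1 ≤ n →
      c₀ / Real.sqrt n ≤
          dW (Measure.map (U2 (fdiff p Z) (rp 0) n) (ℙ : Measure Ω))
            (gaussianReal 0 (Real.toNNReal (2 * ∑' j : ℤ, (rp j) ^ 2))) ∧
        dW (Measure.map (U2 (fdiff p Z) (rp 0) n) (ℙ : Measure Ω))
            (gaussianReal 0 (Real.toNNReal (2 * ∑' j : ℤ, (rp j) ^ 2))) ≤
          C₀ / Real.sqrt n := by
  obtain ⟨K, hsign, -⟩ := hmono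
  exact statement_16_general Z r hZ p hp rp hZp ⟨K, hsign⟩

end
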